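/- arXiv:1903.09743 — 2 statements merged into one kernel-verified Lean document; each statement's English description precedes it below -/
import Mathlib

section
/- Let m ≥ 1, let c₁,…,cₘ be real numbers, and let b₁,…,bₘ : [0,∞) → ℝ be differentiable functions with bᵢ(0) ≥ cᵢ for all i. Assume that for every t ≥ 0 and every i, if bᵢ(t) = cᵢ and bⱼ(t) ≥ cⱼ for all j ∈ {1,…,m}, then bᵢ′(t) > 0. Then bᵢ(t) ≥ cᵢ for all t ≥ 0 and all i. -/
/-- **Scalar invariance lemma underlying the distributed barrier-certificate theorem.**
Given `m ≥ 1` differentiable functions `bᵢ : [0,∞) → ℝ` (with derivatives `b'ᵢ`) and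
thresholds `cᵢ` such that `bᵢ(0) ≥ cᵢ`, if whenever `bᵢ(t) = cᵢ` while `bⱼ(t) ≥ cⱼ` for
all `j` one has `bᵢ'(t) > 0`, then `bᵢ(t) ≥ cᵢ` for all `t ≥ 0` and all `i`. -/
theorem scalar_distributed_invariance
    {m : ℕ} (hm : 1 ≤ m) (c : Fin m → ℝ)
    (b b' : Fin m → ℝ → ℝ)
    (hderiv : ∀ i, ∀ t, 0 ≤ t → HasDerivAt (b i) (b' i t) t)
    (h0 : ∀ i, c i ≤ b i 0)
    (hbound : ∀ t, 0 ≤ t → ∀ i, b i t = c i → (∀ j, c j ≤ b j t) → 0 < b' i t) :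
    ∀ t, 0 ≤ t → ∀ i, c i ≤ b i t := by
  intro T hT
  have hcont : ContinuousOn (fun t => fun i => b i t) (Set.Icc 0 T) :=
    continuousOn_pi.2 fun i t ht => (hderiv i t ht.1).continuousAt.continuousWithinAt
  have hcl : IsClosed ({t | ∀ i, c i ≤ b i t} ∩ Set.Icc 0 T) := by
    have := hcont.preimage_isClosed_of_isClosed isClosed_Icc (isClosed_Ici (a := c))
    rw [Set.inter_comm]
    exact this
  have key : Set.Icc 0 T ⊆ {t | ∀ i, c i ≤ b i t} := by
    refine hcl.Icc_subset_of_forall_mem_nhdsWithin h0 ?_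
    rintro x ⟨hx, hx0, -⟩
    change ∀ᶠ t in nhdsWithin x (Set.Ioi x), ∀ i, c i ≤ b i t
    rw [Filter.eventually_all]
    intro i
    rcases (hx i).lt_or_eq with h | h
    · have := (hderiv i x hx0).continuousAt.eventually (lt_mem_nhds h)
      exact (this.filter_mono nhdsWithin_le_nhds).mono fun _ h => h.le
    · have hpos := hbound x hx0 i h.symm hx
      have hs := (hasDerivAt_iff_tendsto_slope.1 (hderiv i x hx0)).eventually (lt_mem_nhds hpos)
      have hs' := hs.filter_mono (nhdsWithin_mono x (fun y (hy : x < y) => ne_of_gt hy))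
      filter_upwards [hs', self_mem_nhdsWithin] with t ht hxt
      have hxt' : 0 < t - x := sub_pos.2 hxt
      rw [slope_def_field, div_pos_iff_of_pos_right hxt'] at ht
      linarith
  exact key ⟨hT, le_rfl⟩
end

section
/- (Putinar's Positivstellensatz.) Let k₁,…,kₘ ∈ ℝ[x₁,…,xₙ] be polynomials, set k₀ = 1, and let 𝒦 = {x ∈ ℝⁿ : k₁(x) ≥ 0, …, kₘ(x) ≥ 0} be compact. Suppose there exist sum-of-squares polynomials σ₀,…,σₘ such that μ := Σ_{j=0}^m σⱼ kⱼ has compact superlevel set {x ∈ ℝⁿ : μ(x) ≥ 0}. Then every polynomial p ∈ ℝ[x₁,…,xₙ] with p(x) > 0 for all x ∈ 𝒦 admits a representation p = Σ_{j=0}^m σ̃ⱼ kⱼ for some sum-of-squares polynomials σ̃₀,…,σ̃ₘ. -/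
/-- A multivariate real polynomial is a sum of squares (SOS) if it is a finite sum of
squares of polynomials. -/
def IsSOS {n : ℕ} (p : MvPolynomial (Fin n) ℝ) : Prop :=
  ∃ (s : ℕ) (h : Fin s → MvPolynomial (Fin n) ℝ), p = ∑ i, (h i) ^ 2


/-! ### Quadratic modules -/

structure IsQM {A : Type*} [CommRing A] (M : Set A) : Prop where
  one_mem : (1 : A) ∈ M
  add_mem : ∀ a ∈ M, ∀ b ∈ M, a + b ∈ M
  sq_mul : ∀ a, ∀ m ∈ M, a ^ 2 * m ∈ M

namespace IsQM
variable {A : Type*} [CommRing A] {M : Set A}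

lemma zero_mem (h : IsQM M) : (0 : A) ∈ M := by
  simpa using h.sq_mul 0 1 h.one_mem

lemma sq_mem (h : IsQM M) (a : A) : a ^ 2 ∈ M := by
  simpa using h.sq_mul a 1 h.one_mem

lemma sos_mul (h : IsQM M) {s m : A} (hs : IsSumSq s) (hm : m ∈ M) : s * m ∈ M := by
  induction hs with
  | zero => simpa using h.zero_mem
  | sq_add a hs ih =>
    rw [add_mul, ← pow_two]
    exact h.add_mem _ (h.sq_mul _ _ hm) _ ih

lemma sos_mem (h : IsQM M) {s : A} (hs : IsSumSq s) : s ∈ M := by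
  simpa using h.sos_mul hs h.one_mem

/-- adding one generator -/
lemma adjoin (h : IsQM M) (p : A) : IsQM {x | ∃ q ∈ M, ∃ s, IsSumSq s ∧ x = q + s * p} where
  one_mem := ⟨1, h.one_mem, 0, IsSumSq.zero, by simp⟩
  add_mem := by
    rintro _ ⟨q, hq, s, hs, rfl⟩ _ ⟨q', hq', s', hs', rfl⟩
    exact ⟨q + q', h.add_mem _ hq _ hq', s + s', hs.add hs', by ring⟩
  sq_mul := by
    rintro a _ ⟨q, hq, s, hs, rfl⟩
    exact ⟨a ^ 2 * q, h.sq_mul _ _ hq, a ^ 2 * s,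
      (IsSquare.sq a).isSumSq.mul hs, by ring⟩

lemma exists_maximal (h : IsQM M) (hM : (-1 : A) ∉ M) :
    ∃ Q, M ⊆ Q ∧ IsQM Q ∧ (-1 : A) ∉ Q ∧ ∀ Q', IsQM Q' → (-1 : A) ∉ Q' → Q ⊆ Q' → Q' = Q := by
  obtain ⟨Q, hMQ, hQ⟩ := zorn_subset_nonempty {Q : Set A | IsQM Q ∧ (-1 : A) ∉ Q} (by
    intro c hc hchain hne
    refine ⟨⋃₀ c, ⟨⟨?_, ?_, ?_⟩, ?_⟩, fun s hs => Set.subset_sUnion_of_mem hs⟩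
    · obtain ⟨s, hs⟩ := hne
      exact ⟨s, hs, (hc hs).1.one_mem⟩
    · rintro a ⟨s, hs, has⟩ b ⟨t, ht, hbt⟩
      rcases hchain.total hs ht with hst | hst
      · exact ⟨t, ht, (hc ht).1.add_mem _ (hst has) _ hbt⟩
      · exact ⟨s, hs, (hc hs).1.add_mem _ has _ (hst hbt)⟩
    · rintro a m ⟨s, hs, has⟩
      exact ⟨s, hs, (hc hs).1.sq_mul _ _ has⟩
    · rintro ⟨s, hs, has⟩
      exact (hc hs).2 has) M ⟨h, hM⟩
  exact ⟨Q, hMQ, hQ.prop.1, hQ.prop.2, fun Q' h1 h2 h3 => (hQ.eq_of_subset ⟨h1, h2⟩ h3).symm⟩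

section real
variable [Algebra ℝ A]

lemma const_mem (h : IsQM M) {r : ℝ} (hr : 0 ≤ r) : algebraMap ℝ A r ∈ M := by
  have := h.sq_mem (algebraMap ℝ A (Real.sqrt r))
  rwa [← map_pow, Real.sq_sqrt hr] at this

lemma const_mul (h : IsQM M) {r : ℝ} (hr : 0 ≤ r) {m : A} (hm : m ∈ M) : algebraMap ℝ A r * m ∈ M := by
  have := h.sq_mul (algebraMap ℝ A (Real.sqrt r)) m hm
  rwa [← map_pow, Real.sq_sqrt hr] at this

lemma of_const_mul (h : IsQM M) {r : ℝ} (hr : 0 < r) {m : A} (hm : algebraMap ℝ A r * m ∈ M) : m ∈ M := by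
  have := h.const_mul (inv_nonneg.2 hr.le) hm
  rwa [← mul_assoc, ← map_mul, inv_mul_cancel₀ hr.ne', map_one, one_mul] at this

lemma sq_sub_sq (h : IsQM M) {r : ℝ} (hr : 0 < r) {a : A} (h1 : algebraMap ℝ A r - a ∈ M) (h2 : algebraMap ℝ A r + a ∈ M) :
    algebraMap ℝ A (r ^ 2) - a ^ 2 ∈ M := by
  apply h.of_const_mul (r := 2 * r) (by positivity)
  have := h.add_mem _ (h.sq_mul (algebraMap ℝ A r - a) _ h2) _ (h.sq_mul (algebraMap ℝ A r + a) _ h1)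
  convert this using 1
  simp only [map_mul, map_pow, map_ofNat]
  ring

lemma mul_bdd (h : IsQM M) {a : A} {r : ℝ} (hr : 0 < r) (h1 : algebraMap ℝ A r - a ∈ M) (h2 : algebraMap ℝ A r + a ∈ M)
    {b : A} {s : ℝ} (hs : 0 < s) (h3 : algebraMap ℝ A s - b ∈ M) (h4 : algebraMap ℝ A s + b ∈ M) :
    algebraMap ℝ A ((r + s) ^ 2) - a * b ∈ M := by
  -- ab = ((a+b)^2 - (a-b)^2)/4
  have k1 := h.sq_sub_sq (r := r + s) (a := a + b) (by positivity)
    (by convert h.add_mem _ h1 _ h3 using 1; simp only [map_add]; ring)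
    (by convert h.add_mem _ h2 _ h4 using 1; simp only [map_add]; ring)
  apply h.of_const_mul (r := 4) (by positivity)
  have k2 := h.add_mem _ (h.add_mem _ k1 _ (h.sq_mem (a - b))) _
    (h.const_mem (r := 3 * (r + s) ^ 2) (by positivity))
  convert k2 using 1
  simp only [map_mul, map_pow, map_ofNat, map_add]
  ring

def Arch (A : Type*) [CommRing A] [Algebra ℝ A] (M : Set A) : Prop :=
  ∀ a : A, ∃ r : ℝ, 0 < r ∧ algebraMap ℝ A r - a ∈ M

lemma arch_mono {M N : Set A} (h : Arch A M) (hMN : M ⊆ N) : Arch A N := fun a =>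
  let ⟨r, hr, h1⟩ := h a; ⟨r, hr, hMN h1⟩

/-- A maximal archimedean proper quadratic module gives a real character. -/
lemma exists_char (h : IsQM M) (harch : Arch A M) (hM : (-1 : A) ∉ M) :
    ∃ φ : A →ₐ[ℝ] ℝ, ∀ m ∈ M, 0 ≤ φ m := by
  obtain ⟨Q, hMQ, hQ, hQ1, hmax⟩ := h.exists_maximal hM
  have hA := arch_mono harch hMQ
  -- the support is closed under multiplication
  have hsupp : ∀ a, a ∈ Q → -a ∈ Q → ∀ b, b * a ∈ Q := by
    intro a ha hna b
    apply hQ.of_const_mul (r := 4) (by positivity)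
    convert hQ.add_mem _ (hQ.sq_mul (b + 1) _ ha) _ (hQ.sq_mul (b - 1) _ hna) using 1
    simp only [map_ofNat]; ring
  have htot : ∀ a, a ∈ Q ∨ -a ∈ Q := by
    intro a
    by_contra hcon
    push Not at hcon
    obtain ⟨ha, hna⟩ := hcon
    have key : ∀ p, p ∉ Q → ∃ q ∈ Q, ∃ s, IsSumSq s ∧ -1 = q + s * p := by
      intro p hp
      by_contra hc
      have := hmax _ (hQ.adjoin p) hc (fun x hx => ⟨x, hx, 0, IsSumSq.zero, by simp⟩)
      apply hp
      rw [← this]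
      exact ⟨0, hQ.zero_mem, 1, IsSquare.one.isSumSq, by simp⟩
    obtain ⟨q1, hq1, s1, hs1, e1⟩ := key _ ha
    obtain ⟨q2, hq2, s2, hs2, e2⟩ := key _ hna
    have hn : -s1 ∈ Q := by
      have := hQ.add_mem _ (hQ.add_mem _ (hQ.sos_mem hs2) _ (hQ.sos_mul hs1 hq2)) _
        (hQ.sos_mul hs2 hq1)
      convert this using 1
      linear_combination s2 * e1 + s1 * e2
    apply hQ1
    rw [e1, mul_comm]
    exact hQ.add_mem _ hq1 _ (hsupp s1 (hQ.sos_mem hs1) hn a)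
  have hneg : ∀ r : ℝ, algebraMap ℝ A r ∈ Q → 0 ≤ r := by
    intro r hr
    by_contra hlt
    push Not at hlt
    apply hQ1
    apply hQ.of_const_mul (r := -r) (by linarith)
    simpa using hr
  -- the standard part
  have hst : ∀ a : A, ∃ t : ℝ, ∀ ε > 0, algebraMap ℝ A (t + ε) - a ∈ Q ∧ a - algebraMap ℝ A (t - ε) ∈ Q := by
    intro a
    let S := {r : ℝ | a - algebraMap ℝ A r ∈ Q}
    have hne : S.Nonempty := by
      obtain ⟨r, hr, h1⟩ := hA (-a)
      exact ⟨-r, by simp only [S, Set.mem_ofPred_eq, map_neg]; convert h1 using 1; ring⟩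
    have hbdd : BddAbove S := by
      obtain ⟨r, hr, h1⟩ := hA a
      refine ⟨r, fun t ht => ?_⟩
      have := hneg (r - t) (by
        convert hQ.add_mem _ h1 _ ht using 1; simp only [map_sub]; ring)
      linarith
    refine ⟨sSup S, fun ε hε => ⟨?_, ?_⟩⟩
    · rcases htot (algebraMap ℝ A (sSup S + ε) - a) with h1 | h1
      · exact h1
      · have : sSup S + ε ∈ S := by simpa [S] using h1
        have := le_csSup hbdd this
        linarith
    · obtain ⟨t, ht, hlt⟩ := exists_lt_of_lt_csSup hne (show sSup S - ε < sSup S by linarith)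
      have ht' : a - algebraMap ℝ A t ∈ Q := ht
      convert hQ.add_mem _ ht' _ (hQ.const_mem (r := t - (sSup S - ε)) (by linarith)) using 1
      simp only [map_sub]; ring
  choose st hst using hst
  have huniq : ∀ (a : A) (t : ℝ), (∀ ε > 0, algebraMap ℝ A (t + ε) - a ∈ Q ∧ a - algebraMap ℝ A (t - ε) ∈ Q) → st a = t := by
    intro a t ht
    apply le_antisymm
    · apply le_of_forall_pos_le_add
      intro ε hε
      have := hneg (t + ε / 2 - (st a - ε / 2)) (by
        convert hQ.add_mem _ (ht (ε / 2) (by positivity)).1 _ (hst a (ε / 2) (by positivity)).2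
          using 1
        simp only [map_sub]; ring)
      linarith
    · apply le_of_forall_pos_le_add
      intro ε hε
      have := hneg (st a + ε / 2 - (t - ε / 2)) (by
        convert hQ.add_mem _ (ht (ε / 2) (by positivity)).2 _ (hst a (ε / 2) (by positivity)).1
          using 1
        simp only [map_sub]; ring)
      linarith
  have hadd : ∀ a b, st (a + b) = st a + st b := by
    intro a b
    apply huniq
    intro ε hε
    obtain ⟨h1, h2⟩ := hst a (ε / 2) (by positivity)
    obtain ⟨h3, h4⟩ := hst b (ε / 2) (by positivity)
    refine ⟨?_, ?_⟩
    · convert hQ.add_mem _ h1 _ h3 using 1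
      rw [show st a + st b + ε = st a + ε / 2 + (st b + ε / 2) by ring, map_add]; ring
    · convert hQ.add_mem _ h2 _ h4 using 1
      rw [show st a + st b - ε = st a - ε / 2 + (st b - ε / 2) by ring, map_add]; ring
  have hconst : ∀ r : ℝ, st (algebraMap ℝ A r) = r := by
    intro r
    apply huniq
    intro ε hε
    rw [← map_sub, ← map_sub]
    exact ⟨hQ.const_mem (by linarith), hQ.const_mem (by linarith)⟩
  have hneg' : ∀ a, st (-a) = - st a := by
    intro a
    have := hadd a (-a)
    rw [add_neg_cancel] at this
    have h0 := hconst 0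
    rw [map_zero] at h0
    linarith
  have hpos : ∀ a ∈ Q, 0 ≤ st a := by
    intro a ha
    apply le_of_forall_pos_le_add
    intro ε hε
    apply hneg
    convert hQ.add_mem _ ha _ (hst a ε hε).1 using 1
    ring
  have hsq0 : ∀ a, st a = 0 → st (a ^ 2) = 0 := by
    intro a ha
    apply huniq
    intro ε hε
    have h1 := hst a (Real.sqrt ε) (Real.sqrt_pos.2 hε)
    rw [ha] at h1
    refine ⟨?_, ?_⟩
    · have := hQ.sq_sub_sq (r := Real.sqrt ε) (a := a) (Real.sqrt_pos.2 hε)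
        (by simpa using h1.1) (by simpa [add_comm] using h1.2)
      rw [Real.sq_sqrt hε.le] at this
      simpa using this
    · convert hQ.add_mem _ (hQ.sq_mem a) _ (hQ.const_mem hε.le) using 1
      simp
  have hcmul : ∀ (r : ℝ) a, st (algebraMap ℝ A r * a) = r * st a := by
    have hp : ∀ (r : ℝ) a, 0 < r → st (algebraMap ℝ A r * a) = r * st a := by
      intro r a hr
      apply huniq
      intro ε hε
      obtain ⟨h1, h2⟩ := hst a (ε / r) (by positivity)
      refine ⟨?_, ?_⟩
      · convert hQ.const_mul hr.le h1 using 1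
        rw [mul_sub, ← map_mul]; congr 2; field_simp
      · convert hQ.const_mul hr.le h2 using 1
        rw [mul_sub, ← map_mul]; congr 2; field_simp
    intro r a
    rcases lt_trichotomy r 0 with hr | hr | hr
    · have := hp (-r) a (by linarith)
      rw [map_neg, neg_mul, hneg'] at this
      linarith
    · subst hr
      have := hconst 0
      simpa using this
    · exact hp r a hr
  have hsq : ∀ a, st (a ^ 2) = st a ^ 2 := by
    intro a
    have h1 : st (a + algebraMap ℝ A (- st a)) = 0 := by rw [hadd, hconst]; ring
    have h2 := hsq0 _ h1
    have e : (a + algebraMap ℝ A (- st a)) ^ 2 = a ^ 2 + (algebraMap ℝ A (- 2 * st a) * a + algebraMap ℝ A (st a ^ 2)) := by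
      simp only [map_mul, map_neg, map_pow, map_ofNat]; ring
    rw [e, hadd, hadd, hconst, hcmul] at h2
    linarith
  have hmul : ∀ a b, st (a * b) = st a * st b := by
    intro a b
    have h1 := hsq (a + b)
    rw [show (a + b) ^ 2 = a ^ 2 + (algebraMap ℝ A 2 * (a * b) + b ^ 2) by simp only [map_ofNat]; ring,
      hadd, hadd, hcmul, hsq, hsq, hadd] at h1
    linarith
  refine ⟨{ toFun := st, map_one' := ?_, map_mul' := hmul, map_zero' := ?_, map_add' := hadd,
            commutes' := hconst }, fun m hm => hpos m (hMQ hm)⟩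
  · simpa using hconst 1
  · simpa using hconst 0

/-- Archimedean representation theorem. -/
lemma mem_of_pos (h : IsQM M) (harch : Arch A M) (p : A)
    (hp : ∀ φ : A →ₐ[ℝ] ℝ, (∀ m ∈ M, 0 ≤ φ m) → 0 < φ p) : p ∈ M := by
  have h1 : (-1 : A) ∈ {x | ∃ q ∈ M, ∃ s, IsSumSq s ∧ x = q + s * (-p)} := by
    by_contra hcon
    have hsub : M ⊆ {x | ∃ q ∈ M, ∃ s, IsSumSq s ∧ x = q + s * (-p)} :=
      fun x hx => ⟨x, hx, 0, IsSumSq.zero, by simp⟩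
    obtain ⟨φ, hφ⟩ := (h.adjoin (-p)).exists_char (arch_mono harch hsub) hcon
    have h2 := hp φ (fun m hm => hφ m (hsub hm))
    have h3 := hφ (-p) ⟨0, h.zero_mem, 1, IsSquare.one.isSumSq, by simp⟩
    rw [map_neg] at h3
    linarith
  obtain ⟨q, hq, g, hg, e⟩ := h1
  have hgp : g * p - 1 ∈ M := by
    convert hq using 1; linear_combination e
  obtain ⟨k1, hk1, hk1'⟩ := harch (g ^ 2 * p)
  obtain ⟨k2, hk2, hk2'⟩ := harch g
  obtain ⟨r0, hr0, hr0'⟩ := harch (-p)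
  set k := max k1 k2 with hk
  have hkpos : 0 < k := lt_max_of_lt_left hk1
  have hA : algebraMap ℝ A k - g ^ 2 * p ∈ M := by
    convert h.add_mem _ hk1' _ (h.const_mem (r := k - k1) (by simp [hk])) using 1
    simp only [map_sub]; ring
  have hB : algebraMap ℝ A (2 * k) - g ∈ M := by
    have : k2 ≤ k := le_max_right _ _
    convert h.add_mem _ hk2' _ (h.const_mem (r := 2 * k - k2) (by linarith)) using 1
    simp only [map_sub]; ring
  have step : ∀ r : ℝ, 0 ≤ r → p + algebraMap ℝ A r ∈ M → p + algebraMap ℝ A (r - 1 / k) ∈ M := by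
    intro r hr hpr
    apply h.of_const_mul (r := k ^ 2) (by positivity)
    have := h.add_mem _ (h.add_mem _ (h.sq_mul (algebraMap ℝ A k - g) _ hpr) _
      (h.const_mul (r := 2 * k) (by positivity) hgp)) _
      (h.add_mem _ hA _ (h.const_mul hr (h.sos_mul hg hB)))
    convert this using 1
    rw [mul_add, ← map_mul, show k ^ 2 * (r - 1 / k) = k ^ 2 * r - k by field_simp]
    simp only [map_mul, map_pow, map_ofNat, map_sub]
    ring
  have hfin : ∀ N : ℕ, p ∈ M ∨ (0 ≤ r0 - N / k ∧ p + algebraMap ℝ A (r0 - N / k) ∈ M) := by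
    intro N
    induction N with
    | zero => right; constructor
              · simpa using hr0.le
              · convert hr0' using 1; simp; ring
    | succ N ih =>
      rcases ih with ih | ⟨ih1, ih2⟩
      · exact Or.inl ih
      · have := step _ ih1 ih2
        rw [show r0 - N / k - 1 / k = r0 - (N + 1 : ℕ) / k by push_cast; ring] at this
        by_cases hneg : 0 ≤ r0 - (N + 1 : ℕ) / k
        · exact Or.inr ⟨hneg, this⟩
        · left
          convert h.add_mem _ this _ (h.const_mem (r := -(r0 - (N + 1 : ℕ) / k)) (by linarith))
            using 1
          simp only [map_neg]; ring
  obtain ⟨N, hN⟩ := exists_nat_gt (r0 * k)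
  rcases hfin N with h' | ⟨h', _⟩
  · exact h'
  · exfalso
    have : r0 < N / k := by rwa [lt_div_iff₀ hkpos]
    linarith

end real
end IsQM

lemma arch_of_ball {n : ℕ} {M : Set (MvPolynomial (Fin n) ℝ)} (h : IsQM M) (N : ℝ)
    (hN : algebraMap ℝ _ N - ∑ i, (MvPolynomial.X i) ^ 2 ∈ M) :
    IsQM.Arch (MvPolynomial (Fin n) ℝ) M := by
  have key : ∀ a : MvPolynomial (Fin n) ℝ, ∃ r : ℝ, 0 < r ∧ algebraMap ℝ _ r - a ∈ M ∧
      algebraMap ℝ _ r + a ∈ M := by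
    intro a
    induction a using MvPolynomial.induction_on with
    | C a =>
      refine ⟨|a| + 1, by positivity, ?_, ?_⟩
      · rw [← MvPolynomial.algebraMap_eq, ← map_sub]
        exact h.const_mem (by linarith [le_abs_self a])
      · rw [← MvPolynomial.algebraMap_eq, ← map_add]
        exact h.const_mem (by linarith [neg_abs_le a])
    | add p q hp hq =>
      obtain ⟨r, hr, h1, h2⟩ := hp
      obtain ⟨s, hs, h3, h4⟩ := hq
      refine ⟨r + s, by positivity, ?_, ?_⟩
      · convert h.add_mem _ h1 _ h3 using 1; rw [map_add]; ring
      · convert h.add_mem _ h2 _ h4 using 1; rw [map_add]; ring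
    | mul_X p i hp =>
      obtain ⟨r, hr, h1, h2⟩ := hp
      have hX : ∃ s : ℝ, 0 < s ∧ algebraMap ℝ _ s - (MvPolynomial.X i : MvPolynomial (Fin n) ℝ) ∈ M ∧
          algebraMap ℝ _ s + (MvPolynomial.X i : MvPolynomial (Fin n) ℝ) ∈ M := by
        have h5 : algebraMap ℝ _ N - (MvPolynomial.X i : MvPolynomial (Fin n) ℝ) ^ 2 ∈ M := by
          have : (∑ j ∈ Finset.univ.erase i, (MvPolynomial.X j : MvPolynomial (Fin n) ℝ) ^ 2) ∈ M :=
            h.sos_mem (IsSumSq.sum fun j _ => (IsSquare.sq _).isSumSq)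
          convert h.add_mem _ hN _ this using 1
          rw [← Finset.add_sum_erase _ _ (Finset.mem_univ i)]; ring
        have h6 : ∀ u : MvPolynomial (Fin n) ℝ, u ^ 2 = (MvPolynomial.X i) ^ 2 →
            algebraMap ℝ _ (|N| + 1) + u ∈ M := by
          intro u hu
          have e : algebraMap ℝ (MvPolynomial (Fin n) ℝ) (1 / 2) * 2 = 1 := by
            rw [show (2 : MvPolynomial (Fin n) ℝ) = algebraMap ℝ _ 2 from (map_ofNat _ 2).symm, ← map_mul]; norm_num
          convert h.add_mem _ (h.add_mem _ h5 _ (h.sq_mem (u + algebraMap ℝ _ (1 / 2)))) _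
            (h.const_mem (r := |N| + 1 - N - (1 / 2) ^ 2) (by linarith [le_abs_self N])) using 1
          rw [map_sub, map_sub, map_pow, ← hu]
          linear_combination -u * e
        refine ⟨|N| + 1, by positivity, ?_, ?_⟩
        · simpa [sub_eq_add_neg] using h6 (-MvPolynomial.X i) (by ring)
        · exact h6 _ rfl
      obtain ⟨s, hs, h3, h4⟩ := hX
      refine ⟨(r + s) ^ 2, by positivity, h.mul_bdd hr h1 h2 hs h3 h4, ?_⟩
      have := h.mul_bdd (a := -p) hr (by simpa using h2) (by simpa [← sub_eq_add_neg] using h1) hs h3 h4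
      simpa using this
  intro a
  obtain ⟨r, hr, h1, _⟩ := key a
  exact ⟨r, hr, h1⟩

/-! ### Preorderings, ordered fields and real closures -/

structure IsPre {A : Type*} [CommRing A] (T : Set A) : Prop where
  add_mem : ∀ a ∈ T, ∀ b ∈ T, a + b ∈ T
  mul_mem : ∀ a ∈ T, ∀ b ∈ T, a * b ∈ T
  sq_mem : ∀ a, a ^ 2 ∈ T

namespace IsPre
variable {A : Type*} [CommRing A] {T : Set A}

lemma zero_mem (h : IsPre T) : (0 : A) ∈ T := by simpa using h.sq_mem 0
lemma one_mem (h : IsPre T) : (1 : A) ∈ T := by simpa using h.sq_mem 1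

lemma adjoin (h : IsPre T) (p : A) : IsPre {x | ∃ a ∈ T, ∃ b ∈ T, x = a + b * p} where
  add_mem := by
    rintro _ ⟨q, hq, s, hs, rfl⟩ _ ⟨q', hq', s', hs', rfl⟩
    exact ⟨q + q', h.add_mem _ hq _ hq', s + s', h.add_mem _ hs _ hs', by ring⟩
  mul_mem := by
    rintro _ ⟨q, hq, s, hs, rfl⟩ _ ⟨q', hq', s', hs', rfl⟩
    exact ⟨q * q' + p ^ 2 * (s * s'),
      h.add_mem _ (h.mul_mem _ hq _ hq') _ (h.mul_mem _ (h.sq_mem p) _ (h.mul_mem _ hs _ hs')),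
      q * s' + s * q', h.add_mem _ (h.mul_mem _ hq _ hs') _ (h.mul_mem _ hs _ hq'), by ring⟩
  sq_mem a := ⟨a ^ 2, h.sq_mem a, 0, h.zero_mem, by simp⟩

lemma exists_maximal (h : IsPre T) (hM : (-1 : A) ∉ T) :
    ∃ Q, T ⊆ Q ∧ IsPre Q ∧ (-1 : A) ∉ Q ∧
      ∀ Q', IsPre Q' → (-1 : A) ∉ Q' → Q ⊆ Q' → Q' = Q := by
  obtain ⟨Q, hMQ, hQ⟩ := zorn_subset_nonempty {Q : Set A | IsPre Q ∧ (-1 : A) ∉ Q} (by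
    intro c hc hchain hne
    refine ⟨⋃₀ c, ⟨⟨?_, ?_, ?_⟩, ?_⟩, fun s hs => Set.subset_sUnion_of_mem hs⟩
    · rintro a ⟨s, hs, has⟩ b ⟨t, ht, hbt⟩
      rcases hchain.total hs ht with hst | hst
      · exact ⟨t, ht, (hc ht).1.add_mem _ (hst has) _ hbt⟩
      · exact ⟨s, hs, (hc hs).1.add_mem _ has _ (hst hbt)⟩
    · rintro a ⟨s, hs, has⟩ b ⟨t, ht, hbt⟩
      rcases hchain.total hs ht with hst | hst
      · exact ⟨t, ht, (hc ht).1.mul_mem _ (hst has) _ hbt⟩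
      · exact ⟨s, hs, (hc hs).1.mul_mem _ has _ (hst hbt)⟩
    · intro a
      obtain ⟨s, hs⟩ := hne
      exact ⟨s, hs, (hc hs).1.sq_mem a⟩
    · rintro ⟨s, hs, has⟩
      exact (hc hs).2 has) T ⟨h, hM⟩
  exact ⟨Q, hMQ, hQ.prop.1, hQ.prop.2, fun Q' h1 h2 h3 => (hQ.eq_of_subset ⟨h1, h2⟩ h3).symm⟩

end IsPre

lemma exists_order {F : Type*} [Field F] (C : Set F)
    (hadd : ∀ a ∈ C, ∀ b ∈ C, a + b ∈ C) (hmul : ∀ a ∈ C, ∀ b ∈ C, a * b ∈ C)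
    (htot : ∀ a, a ∈ C ∨ -a ∈ C) (hanti : ∀ a, a ∈ C → -a ∈ C → a = 0) :
    ∃ (_ : LinearOrder F) (_ : IsStrictOrderedRing F), ∀ x : F, 0 ≤ x ↔ x ∈ C := by
  classical
  let S : RingCone F :=
    { carrier := C
      add_mem' := fun {a b} ha hb => hadd a ha b hb
      mul_mem' := fun {a b} ha hb => hmul a ha b hb
      zero_mem' := by rcases htot 0 with h | h <;> simpa using h
      one_mem' := by
        rcases htot 1 with h | h
        · exact h
        · simpa using hmul _ h _ h
      eq_zero_of_mem_of_neg_mem' := fun {a} h1 h2 => hanti a h1 h2 }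
  have : HasMemOrNegMem S := ⟨htot⟩
  let dec : DecidablePred (· ∈ S) := Classical.decPred _
  let lo : LinearOrder F := LinearOrder.mkOfAddGroupCone S
  have : IsOrderedRing F := IsOrderedRing.mkOfCone S
  refine ⟨lo, IsOrderedRing.toIsStrictOrderedRing F, fun x => ?_⟩
  change x - 0 ∈ C ↔ x ∈ C
  rw [sub_zero]

universe u

/-- A proper preordering is nonnegative under some homomorphism to an ordered field. -/
lemma IsPre.exists_hom {A : Type u} [CommRing A] {T : Set A} (h : IsPre T) (hT : (-1 : A) ∉ T) :
    ∃ (F : Type u) (_ : Field F) (_ : LinearOrder F) (_ : IsStrictOrderedRing F) (φ : A →+* F),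
      ∀ t ∈ T, 0 ≤ φ t := by
  obtain ⟨P, hTP, hP, hP1, hmax⟩ := h.exists_maximal hT
  have key : ∀ p, p ∉ P → ∃ a ∈ P, ∃ b ∈ P, -1 = a + b * p := by
    intro p hp
    by_contra hc
    have := hmax _ (hP.adjoin p) hc (fun x hx => ⟨x, hx, 0, hP.zero_mem, by simp⟩)
    apply hp
    rw [← this]
    exact ⟨0, hP.zero_mem, 1, hP.one_mem, by simp⟩
  have htot : ∀ a, a ∈ P ∨ -a ∈ P := by
    intro a
    by_contra hcon
    push Not at hcon
    obtain ⟨p1, hp1, q1, hq1, e1⟩ := key _ hcon.1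
    obtain ⟨p2, hp2, q2, hq2, e2⟩ := key _ hcon.2
    apply hP1
    have := hP.add_mem _ (hP.add_mem _ hp1 _ hp2) _ (hP.add_mem _ (hP.mul_mem _ hp1 _ hp2) _
      (hP.mul_mem _ (hP.sq_mem a) _ (hP.mul_mem _ hq1 _ hq2)))
    convert this using 1
    linear_combination (1 + p2) * e1 - q1 * a * e2
  let I : Ideal A :=
    { carrier := {a | a ∈ P ∧ -a ∈ P}
      zero_mem' := by simpa using hP.zero_mem
      add_mem' := by
        rintro a b ⟨h1, h2⟩ ⟨h3, h4⟩
        refine ⟨hP.add_mem _ h1 _ h3, ?_⟩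
        rw [neg_add]
        exact hP.add_mem _ h2 _ h4
      smul_mem' := by
        rintro b a ⟨h1, h2⟩
        rcases htot b with hb | hb
        · refine ⟨hP.mul_mem _ hb _ h1, ?_⟩
          have := hP.mul_mem _ hb _ h2
          rwa [mul_neg] at this
        · have h3 := hP.mul_mem _ hb _ h1
          have h4 := hP.mul_mem _ hb _ h2
          rw [neg_mul_neg] at h4
          rw [neg_mul] at h3
          exact ⟨h4, h3⟩ }
  have hI : ∀ a, a ∈ I ↔ (a ∈ P ∧ -a ∈ P) := fun a => Iff.rfl
  have hkey2 : ∀ a, a ∉ I → ∃ a', (a' = a ∨ a' = -a) ∧ a' ∉ P := by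
    intro a ha
    rw [hI, not_and_or] at ha
    rcases ha with ha | ha
    · exact ⟨a, Or.inl rfl, ha⟩
    · exact ⟨-a, Or.inr rfl, ha⟩
  have hprime : I.IsPrime := by
    constructor
    · rw [Ideal.ne_top_iff_one, hI]
      exact fun h => hP1 h.2
    · intro a b hab
      by_contra hcon
      push Not at hcon
      obtain ⟨a', ha', ha'P⟩ := hkey2 a hcon.1
      obtain ⟨b', hb', hb'P⟩ := hkey2 b hcon.2
      have hab' : a' * b' ∈ I := by
        rcases ha' with rfl | rfl <;> rcases hb' with rfl | rfl <;> simpa using hab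
      obtain ⟨p1, hp1, q1, hq1, e1⟩ := key _ ha'P
      obtain ⟨p2, hp2, q2, hq2, e2⟩ := key _ hb'P
      apply hP1
      have := hP.add_mem _ (hP.add_mem _ hp1 _ hp2) _ (hP.add_mem _ (hP.mul_mem _ hp1 _ hp2) _
        (hP.mul_mem _ ((hI _).1 hab').2 _ (hP.mul_mem _ hq1 _ hq2)))
      convert this using 1
      linear_combination (1 + p2) * e1 - q1 * a' * e2
  let F := FractionRing (A ⧸ I)
  let φ : A →+* F := (algebraMap (A ⧸ I) F).comp (Ideal.Quotient.mk I)
  have hφ : ∀ a, φ a = 0 ↔ a ∈ I := by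
    intro a
    simp only [φ, RingHom.comp_apply]
    rw [map_eq_zero_iff _ (IsFractionRing.injective (A ⧸ I) F), Ideal.Quotient.eq_zero_iff_mem]
  have hsurj : ∀ x : F, ∃ a b, φ b ≠ 0 ∧ x = φ a / φ b := by
    intro x
    obtain ⟨a, b, hb, rfl⟩ := IsFractionRing.div_surjective (A := A ⧸ I) x
    obtain ⟨a, rfl⟩ := Ideal.Quotient.mk_surjective a
    obtain ⟨b, rfl⟩ := Ideal.Quotient.mk_surjective b
    refine ⟨a, b, ?_, rfl⟩
    simp only [φ, RingHom.comp_apply]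
    rw [Ne, map_eq_zero_iff _ (IsFractionRing.injective (A ⧸ I) F)]
    exact nonZeroDivisors.ne_zero hb
  obtain ⟨lo, so, hle⟩ := exists_order {x : F | ∃ a ∈ P, ∃ b ∈ P, φ b ≠ 0 ∧ x = φ a / φ b}
    (by
      rintro _ ⟨a, ha, b, hb, hb0, rfl⟩ _ ⟨a', ha', b', hb', hb0', rfl⟩
      refine ⟨a * b' + b * a', hP.add_mem _ (hP.mul_mem _ ha _ hb') _ (hP.mul_mem _ hb _ ha'),
        b * b', hP.mul_mem _ hb _ hb', ?_, ?_⟩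
      · rw [map_mul]; exact mul_ne_zero hb0 hb0'
      · rw [map_add, map_mul, map_mul, map_mul, div_add_div _ _ hb0 hb0'])
    (by
      rintro _ ⟨a, ha, b, hb, hb0, rfl⟩ _ ⟨a', ha', b', hb', hb0', rfl⟩
      refine ⟨a * a', hP.mul_mem _ ha _ ha', b * b', hP.mul_mem _ hb _ hb', ?_, ?_⟩
      · rw [map_mul]; exact mul_ne_zero hb0 hb0'
      · rw [map_mul, map_mul, div_mul_div_comm])
    (by
      intro x
      obtain ⟨a, b, hb, rfl⟩ := hsurj x
      have hbb : φ (b ^ 2) ≠ 0 := by rw [map_pow]; exact pow_ne_zero 2 hb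
      rcases htot (a * b) with hab | hab
      · left
        refine ⟨_, hab, b ^ 2, hP.sq_mem b, hbb, ?_⟩
        rw [map_mul, map_pow, pow_two, mul_div_mul_right _ _ hb]
      · right
        refine ⟨_, hab, b ^ 2, hP.sq_mem b, hbb, ?_⟩
        rw [map_neg, map_mul, map_pow, pow_two, neg_div, mul_div_mul_right _ _ hb])
    (by
      rintro x ⟨a, ha, b, hb, hb0, rfl⟩ ⟨a', ha', b', hb', hb0', e⟩
      have h1 : φ (a * b' + a' * b) = 0 := by
        rw [map_add, map_mul, map_mul]
        rw [← neg_div, div_eq_div_iff hb0 hb0'] at e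
        linear_combination -e
      rw [hφ, hI] at h1
      have h2 : φ (a * b') = 0 := by
        rw [hφ, hI]
        refine ⟨hP.mul_mem _ ha _ hb', ?_⟩
        convert hP.add_mem _ (hP.mul_mem _ ha' _ hb) _ h1.2 using 1
        ring
      rw [map_mul, mul_eq_zero] at h2
      rcases h2 with h2 | h2
      · rw [h2, zero_div]
      · exact absurd h2 hb0')
  refine ⟨F, inferInstance, lo, so, φ, fun t ht => ?_⟩
  rw [hle]
  exact ⟨t, hTP ht, 1, hP.one_mem, by simp, by simp⟩

/-- The intermediate value property for polynomials. -/
def PIVT (R : Type*) [Field R] [LinearOrder R] : Prop :=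
  ∀ (f : Polynomial R) (a b : R), a ≤ b → f.eval a * f.eval b ≤ 0 →
    ∃ c, a ≤ c ∧ c ≤ b ∧ f.eval c = 0

open Polynomial in
/-- Enough: a polynomial with a strict sign change has a root somewhere. -/
lemma PIVT.of_root {R : Type*} [Field R] [LinearOrder R] [IsStrictOrderedRing R]
    (h : ∀ (f : Polynomial R) (a b : R), f.eval a * f.eval b < 0 → ∃ c, f.eval c = 0) :
    PIVT R := by
  have main : ∀ (d : ℕ) (f : Polynomial R) (a b : R), f.natDegree ≤ d → a ≤ b →
      f.eval a * f.eval b < 0 → ∃ c, a ≤ c ∧ c ≤ b ∧ f.eval c = 0 := by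
    intro d
    induction d with
    | zero =>
      intro f a b hd _ hlt
      obtain ⟨r, rfl⟩ := Polynomial.natDegree_eq_zero.1 (Nat.le_zero.1 hd)
      simp only [eval_C] at hlt
      exact absurd hlt (not_lt.2 (mul_self_nonneg r))
    | succ d ih =>
      intro f a b hd hab hlt
      obtain ⟨c, hc⟩ := h f a b hlt
      by_cases hin : a ≤ c ∧ c ≤ b
      · exact ⟨c, hin.1, hin.2, hc⟩
      obtain ⟨g, rfl⟩ := Polynomial.dvd_iff_isRoot.2 hc
      have hg0 : g ≠ 0 := by rintro rfl; simp at hlt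
      have hdg : g.natDegree ≤ d := by
        rw [Polynomial.natDegree_mul (X_sub_C_ne_zero c) hg0, natDegree_X_sub_C] at hd
        omega
      have hpos : 0 < (a - c) * (b - c) := by
        rw [not_and_or, not_le, not_le] at hin
        rcases hin with hin | hin
        · exact mul_pos (by linarith) (by linarith)
        · exact mul_pos_of_neg_of_neg (by linarith) (by linarith)
      have hlt' : eval a g * eval b g < 0 := by
        simp only [eval_mul, eval_sub, eval_X, eval_C] at hlt
        by_contra hcon
        push Not at hcon
        have := mul_nonneg hpos.le hcon
        nlinarith
      obtain ⟨e, h1, h2, h3⟩ := ih g a b hdg hab hlt'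
      exact ⟨e, h1, h2, by simp [h3]⟩
  intro f a b hab hle
  rcases hle.lt_or_eq with hlt | heq
  · exact main _ f a b le_rfl hab hlt
  · rcases mul_eq_zero.1 heq with h0 | h0
    · exact ⟨a, le_rfl, hab, h0⟩
    · exact ⟨b, hab, le_rfl, h0⟩

open Polynomial in
/-- The preordering generated by nonnegative constants, squares and the ideal `(f)`. -/
lemma sign_change_proper {R : Type*} [Field R] [LinearOrder R] [IsStrictOrderedRing R]
    (a b : R) (f : R[X]) (hf : f.eval a * f.eval b < 0)
    (s : ℕ) (p : Fin s → R) (hp : ∀ i, 0 ≤ p i) (q : Fin s → R[X]) (g : R[X]) :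
    1 + ∑ i, C (p i) * q i ^ 2 ≠ f * g := by
  have main : ∀ (d : ℕ) (f : R[X]) (q : Fin s → R[X]) (g : R[X]), f.natDegree < d →
      f.eval a * f.eval b < 0 → 1 + ∑ i, C (p i) * q i ^ 2 ≠ f * g := by
    intro d
    induction d with
    | zero => intro f q g hd; omega
    | succ d ih =>
      intro f q g hd hf e
      have hf0 : f ≠ 0 := by rintro rfl; simp at hf
      have hfd : 0 < f.natDegree := by
        rw [Nat.pos_iff_ne_zero]
        intro h0
        obtain ⟨r, rfl⟩ := Polynomial.natDegree_eq_zero.1 h0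
        simp only [eval_C] at hf
        exact absurd hf (not_lt.2 (mul_self_nonneg r))
      -- reduce the `q i` modulo `f`
      let q' : Fin s → R[X] := fun i => q i % f
      have hq' : ∀ i, (q' i).natDegree < f.natDegree := fun i =>
        Polynomial.natDegree_mod_lt _ hfd.ne'
      have hdvd : f ∣ 1 + ∑ i, C (p i) * q' i ^ 2 := by
        have h1 : f ∣ ∑ i, (C (p i) * q i ^ 2 - C (p i) * q' i ^ 2) := by
          apply Finset.dvd_sum
          intro i _
          have h2 : f ∣ q i - q' i := by
            refine ⟨q i / f, ?_⟩
            have := EuclideanDomain.div_add_mod (q i) f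
            simp only [q']
            linear_combination -this
          have : C (p i) * q i ^ 2 - C (p i) * q' i ^ 2 =
            (q i - q' i) * (C (p i) * (q i + q' i)) := by ring
          rw [this]
          exact h2.mul_right _
        rw [Finset.sum_sub_distrib] at h1
        have h3 : f ∣ 1 + ∑ i, C (p i) * q i ^ 2 := ⟨g, e⟩
        have := dvd_sub h3 h1
        convert this using 1
        ring
      obtain ⟨g', e'⟩ := hdvd
      have hval : ∀ x, 0 < f.eval x * g'.eval x := by
        intro x
        rw [← eval_mul, ← e']
        simp only [eval_add, eval_one, eval_finsetSum, eval_mul, eval_C, eval_pow]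
        have : 0 ≤ ∑ i, p i * (q' i).eval x ^ 2 :=
          Finset.sum_nonneg fun i _ => mul_nonneg (hp i) (sq_nonneg _)
        linarith
      have hg0 : g' ≠ 0 := by rintro rfl; simpa using hval a
      have hdeg : g'.natDegree < f.natDegree := by
        have h1 : (f * g').natDegree = f.natDegree + g'.natDegree := natDegree_mul hf0 hg0
        have h2 : (1 + ∑ i, C (p i) * q' i ^ 2).natDegree ≤ 2 * (f.natDegree - 1) := by
          refine (natDegree_add_le _ _).trans (max_le (by simp) ?_)
          refine natDegree_sum_le_of_forall_le _ _ fun i _ => ?_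
          refine (natDegree_C_mul_le _ _).trans ?_
          refine natDegree_pow_le.trans ?_
          have := hq' i
          omega
        rw [e', h1] at h2
        omega
      refine ih g' q' f (by omega) ?_ (by rw [e', mul_comm])
      have h1 := mul_pos (hval a) (hval b)
      by_contra hcon
      push Not at hcon
      have := mul_nonpos_of_nonpos_of_nonneg hf.le hcon
      nlinarith
  exact main _ f q g (Nat.lt_succ_self _) hf

open Polynomial in
lemma sign_change_hom {R : Type u} [Field R] [LinearOrder R] [IsStrictOrderedRing R]
    (a b : R) (f : R[X]) (hf : f.eval a * f.eval b < 0) :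
    ∃ (F : Type u) (_ : Field F) (_ : LinearOrder F) (_ : IsStrictOrderedRing F) (φ : R[X] →+* F),
      φ f = 0 ∧ ∀ r : R, 0 ≤ r → 0 ≤ φ (C r) := by
  let G : Submonoid R[X] :=
    { carrier := {x | ∃ (r : R) (q : R[X]), 0 ≤ r ∧ x = C r * q ^ 2}
      one_mem' := ⟨1, 1, zero_le_one, by simp⟩
      mul_mem' := by
        rintro _ _ ⟨r, q, hr, rfl⟩ ⟨r', q', hr', rfl⟩
        exact ⟨r * r', q * q', mul_nonneg hr hr', by rw [C_mul]; ring⟩ }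
  let S := G.subsemiringClosure
  have hrep : ∀ x ∈ S, ∃ (s : ℕ) (p : Fin s → R) (q : Fin s → R[X]), (∀ i, 0 ≤ p i) ∧
      x = ∑ i, C (p i) * q i ^ 2 := by
    intro x hx
    replace hx : x ∈ AddSubmonoid.closure (G : Set R[X]) := hx
    induction hx using AddSubmonoid.closure_induction with
    | mem x hx =>
      obtain ⟨r, q, hr, rfl⟩ := hx
      exact ⟨1, fun _ => r, fun _ => q, fun _ => hr, by simp⟩
    | zero => exact ⟨0, fun _ => 0, fun _ => 0, fun _ => le_rfl, by simp⟩
    | add x y hx hy ihx ihy =>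
      obtain ⟨s, p, q, hp, rfl⟩ := ihx
      obtain ⟨s', p', q', hp', rfl⟩ := ihy
      refine ⟨s + s', Fin.append p p', Fin.append q q', fun i => ?_, ?_⟩
      · refine Fin.addCases (fun i => ?_) (fun i => ?_) i
        · simpa using hp i
        · simpa using hp' i
      · rw [Fin.sum_univ_add]; simp
  have hSG : ∀ x ∈ G, x ∈ S := fun x hx => AddSubmonoid.subset_closure hx
  have hT : IsPre {x : R[X] | ∃ y ∈ S, ∃ g, x = y + f * g} :=
    { add_mem := by
        rintro _ ⟨y, hy, g, rfl⟩ _ ⟨y', hy', g', rfl⟩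
        exact ⟨y + y', S.add_mem hy hy', g + g', by ring⟩
      mul_mem := by
        rintro _ ⟨y, hy, g, rfl⟩ _ ⟨y', hy', g', rfl⟩
        exact ⟨y * y', S.mul_mem hy hy', y * g' + g * y' + f * g * g', by ring⟩
      sq_mem := fun q => ⟨q ^ 2, hSG _ ⟨1, q, zero_le_one, by simp⟩, 0, by simp⟩ }
  obtain ⟨F, i1, i2, i3, φ, hφ⟩ := hT.exists_hom (by
    rintro ⟨y, hy, g, e⟩
    obtain ⟨s, p, q, hp, rfl⟩ := hrep y hy
    exact sign_change_proper a b f hf s p hp q (-g) (by linear_combination -e))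
  refine ⟨F, i1, i2, i3, φ, le_antisymm ?_ ?_, fun r hr => ?_⟩
  · have := hφ (-f) ⟨0, S.zero_mem, -1, by ring⟩
    rw [map_neg] at this
    linarith
  · exact hφ f ⟨0, S.zero_mem, 1, by ring⟩
  · exact hφ _ ⟨C r, hSG _ ⟨r, 1, hr, by simp⟩, 0, by simp⟩

structure IsFCone {K : Type*} [Field K] (P : Set K) : Prop where
  add_mem : ∀ a ∈ P, ∀ b ∈ P, a + b ∈ P
  mul_mem : ∀ a ∈ P, ∀ b ∈ P, a * b ∈ P
  inv_mem : ∀ a ∈ P, a⁻¹ ∈ P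
  one_mem : (1 : K) ∈ P
  zero_mem : (0 : K) ∈ P
  anti : ∀ a, a ∈ P → -a ∈ P → a = 0
  diff : ∀ a ∈ P, ∀ b ∈ P, a - b ∈ P ∨ b - a ∈ P

lemma IsFCone.image {G K : Type*} [Field G] [LinearOrder G] [IsStrictOrderedRing G] [Field K]
    (ψ : G →+* K) : IsFCone {x : K | ∃ y : G, 0 ≤ y ∧ x = ψ y} where
  add_mem := by
    rintro _ ⟨a, ha, rfl⟩ _ ⟨b, hb, rfl⟩
    exact ⟨a + b, add_nonneg ha hb, by simp⟩
  mul_mem := by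
    rintro _ ⟨a, ha, rfl⟩ _ ⟨b, hb, rfl⟩
    exact ⟨a * b, mul_nonneg ha hb, by simp⟩
  inv_mem := by
    rintro _ ⟨a, ha, rfl⟩
    exact ⟨a⁻¹, inv_nonneg.2 ha, by simp⟩
  one_mem := ⟨1, zero_le_one, by simp⟩
  zero_mem := ⟨0, le_rfl, by simp⟩
  anti := by
    rintro _ ⟨a, ha, rfl⟩ ⟨b, hb, e⟩
    have : -a = b := ψ.injective (by rw [map_neg, e])
    have : a = 0 := by linarith
    simp [this]
  diff := by
    rintro _ ⟨a, ha, rfl⟩ _ ⟨b, hb, rfl⟩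
    rcases le_total a b with h | h
    · exact Or.inr ⟨b - a, sub_nonneg.2 h, by simp⟩
    · exact Or.inl ⟨a - b, sub_nonneg.2 h, by simp⟩

lemma exists_lift {E K L : Type*} [Field E] [Field K] [Field L] [Algebra E K] [Algebra E L]
    [IsAlgClosed K] (θ : L) (hIntegral : IsIntegral E θ) :
    Nonempty (IntermediateField.adjoin E {θ} →ₐ[E] K) := by
  have : Algebra.IsAlgebraic E (IntermediateField.adjoin E {θ}) :=
    IntermediateField.isAlgebraic_adjoin (by
      intro x hx
      rw [Set.mem_singleton_iff] at hx
      rw [hx]; exact hIntegral)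
  exact ⟨IsAlgClosed.lift⟩

/-- Every ordered field embeds into one with the intermediate value property for polynomials. -/
theorem exists_rc_aux (F K : Type u) [Field F] [LinearOrder F] [IsStrictOrderedRing F]
    [Field K] [Algebra F K] [IsAlgClosed K] :
    ∃ (L : Type u) (_ : Field L) (_ : LinearOrder L) (_ : IsStrictOrderedRing L) (ι : F →+* L),
      PIVT L ∧ ∀ x : F, 0 ≤ x → 0 ≤ ι x := by
  obtain ⟨P, hP0P, hPmax⟩ := zorn_subset_nonempty {P : Set K | IsFCone P} (by
    intro c hc hchain hne
    have hdir : ∀ a ∈ ⋃₀ c, ∀ b ∈ ⋃₀ c, ∃ s ∈ c, a ∈ s ∧ b ∈ s := by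
      rintro a ⟨s, hs, has⟩ b ⟨t, ht, hbt⟩
      rcases hchain.total hs ht with hst | hst
      · exact ⟨t, ht, hst has, hbt⟩
      · exact ⟨s, hs, has, hst hbt⟩
    refine ⟨⋃₀ c, ⟨?_, ?_, ?_, ?_, ?_, ?_, ?_⟩, fun s hs => Set.subset_sUnion_of_mem hs⟩
    · intro a ha b hb
      obtain ⟨s, hs, h1, h2⟩ := hdir a ha b hb
      exact ⟨s, hs, (hc hs).add_mem _ h1 _ h2⟩
    · intro a ha b hb
      obtain ⟨s, hs, h1, h2⟩ := hdir a ha b hb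
      exact ⟨s, hs, (hc hs).mul_mem _ h1 _ h2⟩
    · rintro a ⟨s, hs, h1⟩
      exact ⟨s, hs, (hc hs).inv_mem _ h1⟩
    · obtain ⟨s, hs⟩ := hne
      exact ⟨s, hs, (hc hs).one_mem⟩
    · obtain ⟨s, hs⟩ := hne
      exact ⟨s, hs, (hc hs).zero_mem⟩
    · intro a ha hb
      obtain ⟨s, hs, h1, h2⟩ := hdir a ha _ hb
      exact (hc hs).anti _ h1 h2
    · intro a ha b hb
      obtain ⟨s, hs, h1, h2⟩ := hdir a ha b hb
      exact ((hc hs).diff _ h1 _ h2).imp (fun h => ⟨s, hs, h⟩) (fun h => ⟨s, hs, h⟩))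
    _ (IsFCone.image (algebraMap F K))
  have hP : IsFCone P := hPmax.prop
  let E : Subfield K :=
    { carrier := {x | x ∈ P ∨ -x ∈ P}
      zero_mem' := Or.inl hP.zero_mem
      one_mem' := Or.inl hP.one_mem
      neg_mem' := by
        rintro x (h | h)
        · exact Or.inr (by simpa using h)
        · exact Or.inl h
      add_mem' := by
        rintro x y (hx | hx) (hy | hy)
        · exact Or.inl (hP.add_mem _ hx _ hy)
        · have := hP.diff _ hx _ hy
          rw [show x - -y = x + y by ring, show -y - x = -(x + y) by ring] at this
          exact this
        · have := hP.diff _ hy _ hx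
          rw [show y - -x = x + y by ring, show -x - y = -(x + y) by ring] at this
          exact this
        · right
          have := hP.add_mem _ hx _ hy
          rwa [show -x + -y = -(x + y) by ring] at this
      mul_mem' := by
        rintro x y (hx | hx) (hy | hy) <;> have := hP.mul_mem _ hx _ hy
        · exact Or.inl this
        · right; simpa using this
        · right; simpa using this
        · left; simpa using this
      inv_mem' := by
        rintro x (hx | hx) <;> have := hP.inv_mem _ hx
        · exact Or.inl this
        · right; rwa [inv_neg] at this }
  have hE : ∀ x : K, x ∈ E ↔ (x ∈ P ∨ -x ∈ P) := fun x => Iff.rfl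
  obtain ⟨lo, so, hle⟩ := exists_order {x : E | (x : K) ∈ P}
    (fun a ha b hb => hP.add_mem _ ha _ hb) (fun a ha b hb => hP.mul_mem _ ha _ hb)
    (fun a => a.2) (fun a ha hb => Subtype.ext (hP.anti _ ha hb))
  have hle' : ∀ x : E, 0 ≤ x ↔ (x : K) ∈ P := hle
  have hF : ∀ x : F, algebraMap F K x ∈ E := by
    intro x
    rcases le_total 0 x with h | h
    · exact Or.inl (hP0P ⟨x, h, rfl⟩)
    · exact Or.inr (hP0P ⟨-x, by linarith, by simp⟩)
  refine ⟨E, inferInstance, lo, so, (algebraMap F K).codRestrict E hF, ?_, fun x hx => ?_⟩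
  · apply PIVT.of_root
    intro f a b hf
    obtain ⟨L, i1, i2, i3, φ, hφf, hφC⟩ := sign_change_hom a b f hf
    let _ : Algebra E L := (φ.comp Polynomial.C).toAlgebra
    set θ : L := φ Polynomial.X with hθ
    have haeval : ∀ g : Polynomial E, Polynomial.aeval θ g = φ g := by
      intro g
      have : (Polynomial.aeval θ : Polynomial E →ₐ[E] L).toRingHom = φ := by
        apply Polynomial.ringHom_ext
        · intro r; simp [RingHom.algebraMap_toAlgebra]
        · simp [hθ]
      exact congrArg (fun h => h g) this
    have hf0 : f ≠ 0 := by rintro rfl; simp at hf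
    have hIntegral : IsIntegral E θ := by
      rw [← isAlgebraic_iff_isIntegral]
      exact ⟨f, hf0, by rw [haeval, hφf]⟩
    let G := IntermediateField.adjoin E {θ}
    obtain ⟨ψ⟩ : Nonempty (G →ₐ[E] K) := exists_lift θ hIntegral
    let P' : Set K := {x | ∃ y : G, 0 ≤ y ∧ x = ψ y}
    have hP' : IsFCone P' := IsFCone.image ψ.toRingHom
    have hsub : P ⊆ P' := by
      intro x hx
      refine ⟨algebraMap E G ⟨x, Or.inl hx⟩, ?_, ?_⟩
      · have : (0 : L) ≤ φ (Polynomial.C ⟨x, Or.inl hx⟩) := hφC _ ((hle' _).2 hx)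
        exact this
      · rw [AlgHom.commutes]; rfl
    have heq : P = P' := hPmax.eq_of_subset hP' hsub
    let θ' : G := ⟨θ, IntermediateField.mem_adjoin_simple_self E θ⟩
    have hmem : ψ θ' ∈ E := by
      rw [hE, heq]
      rcases le_total 0 θ' with h | h
      · exact Or.inl ⟨θ', h, rfl⟩
      · exact Or.inr ⟨-θ', by linarith, by simp⟩
    refine ⟨⟨ψ θ', hmem⟩, ?_⟩
    have h1 : Polynomial.aeval θ' f = 0 := by
      apply Subtype.ext
      have : ((Polynomial.aeval θ' f : G) : L) = Polynomial.aeval θ f :=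
        (Polynomial.aeval_algHom_apply G.val θ' f).symm
      rw [this, haeval, hφf]; rfl
    have h2 : Polynomial.aeval (ψ θ') f = 0 := by
      rw [Polynomial.aeval_algHom_apply, h1, map_zero]
    have h3 : Polynomial.aeval (algebraMap E K ⟨ψ θ', hmem⟩) f = 0 := h2
    rw [Polynomial.aeval_algebraMap_apply, Polynomial.coe_aeval_eq_eval] at h3
    exact (map_eq_zero_iff _ (algebraMap E K).injective).1 h3
  · rw [hle']
    exact hP0P ⟨x, hx, rfl⟩

theorem exists_rc (F : Type u) [Field F] [LinearOrder F] [IsStrictOrderedRing F] :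
    ∃ (L : Type u) (_ : Field L) (_ : LinearOrder L) (_ : IsStrictOrderedRing L) (ι : F →+* L),
      PIVT L ∧ ∀ x : F, 0 ≤ x → 0 ≤ ι x :=
  exists_rc_aux F (AlgebraicClosure F)

/-! ### Calculus over fields with the intermediate value property -/

section PolyCalc
open Polynomial

variable {R : Type*} [Field R] [LinearOrder R] [IsStrictOrderedRing R]

lemma PIVT.rolle (h : PIVT R) (f : R[X]) (a b : R) (hab : a < b) (ha : f.eval a = 0)
    (hb : f.eval b = 0) : ∃ c, a < c ∧ c < b ∧ (derivative f).eval c = 0 := by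
  by_cases hf : f = 0
  · exact ⟨(a + b) / 2, by linarith, by linarith, by simp [hf]⟩
  -- consecutive roots
  let S := f.roots.toFinset.filter (fun x => a < x ∧ x ≤ b)
  have hS : ∀ x, x ∈ S ↔ (f.eval x = 0 ∧ a < x ∧ x ≤ b) := by
    intro x; simp [S, hf]
  have hne : S.Nonempty := ⟨b, (hS b).2 ⟨hb, hab, le_rfl⟩⟩
  obtain ⟨hb1, hab1, hb1b⟩ := (hS _).1 (S.min'_mem hne)
  have hmin : ∀ x, f.eval x = 0 → a < x → x < S.min' hne → False := by
    intro x h1 h2 h3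
    exact absurd (S.min'_le x ((hS x).2 ⟨h1, h2, by linarith⟩)) (not_le.2 h3)
  generalize S.min' hne = b' at hb1 hab1 hb1b hmin
  obtain ⟨g1, hg1, hg1'⟩ := exists_eq_pow_rootMultiplicity_mul_and_not_dvd f hf a
  have hm : rootMultiplicity a f ≠ 0 := by
    have := (rootMultiplicity_pos hf).2 ha
    omega
  obtain ⟨m, hm⟩ := Nat.exists_eq_succ_of_ne_zero hm
  rw [hm] at hg1
  have hg10 : g1 ≠ 0 := by rintro rfl; simp at hg1'
  obtain ⟨g, hg, hg'⟩ := exists_eq_pow_rootMultiplicity_mul_and_not_dvd g1 hg10 b'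
  have hg1b : g1.eval b' = 0 := by
    rw [hg1] at hb1
    simp only [eval_mul, eval_pow, eval_sub, eval_X, eval_C, mul_eq_zero] at hb1
    rcases hb1 with h0 | h0
    · exact absurd (pow_eq_zero_iff (Nat.succ_ne_zero m) |>.1 h0) (by intro h; linarith)
    · exact h0
  have hn : rootMultiplicity b' g1 ≠ 0 := by
    have := (rootMultiplicity_pos hg10).2 hg1b
    omega
  obtain ⟨n, hn⟩ := Nat.exists_eq_succ_of_ne_zero hn
  rw [hn] at hg
  have hga : g.eval a ≠ 0 := by
    intro h0
    apply hg1'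
    rw [dvd_iff_isRoot, hg]
    simp [h0]
  have hgb : g.eval b' ≠ 0 := by
    intro h0
    apply hg'
    rw [dvd_iff_isRoot]
    exact h0
  have hgg : 0 < g.eval a * g.eval b' := by
    by_contra hcon
    push Not at hcon
    obtain ⟨c, h1, h2, h3⟩ := h g a b' hab1.le hcon
    have hca : a ≠ c := by rintro rfl; exact hga h3
    have hcb : c ≠ b' := by rintro rfl; exact hgb h3
    refine hmin c ?_ (lt_of_le_of_ne h1 hca) (lt_of_le_of_ne h2 hcb)
    rw [hg1, hg]; simp [h3]
  let H : R[X] := C ((m + 1 : ℕ) : R) * (X - C b') * g + C ((n + 1 : ℕ) : R) * (X - C a) * g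
    + (X - C a) * (X - C b') * derivative g
  have hder : derivative f = (X - C a) ^ m * (X - C b') ^ n * H := by
    rw [hg1, hg]
    simp only [derivative_mul, derivative_X_sub_C_pow, H, Nat.succ_eq_add_one, Nat.add_sub_cancel]
    ring
  have hHa : H.eval a = (m + 1) * (a - b') * g.eval a := by simp [H]
  have hHb : H.eval b' = (n + 1) * (b' - a) * g.eval b' := by simp [H]
  have hlt : H.eval a * H.eval b' < 0 := by
    rw [hHa, hHb]
    have hm0 : (0 : R) < m + 1 := by positivity
    have hn0 : (0 : R) < n + 1 := by positivity
    have hd : 0 < b' - a := by linarith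
    have : 0 < ((m : R) + 1) * (n + 1) * (b' - a) ^ 2 * (g.eval a * g.eval b') := by positivity
    nlinarith
  obtain ⟨c, h1, h2, h3⟩ := h H a b' hab1.le hlt.le
  have hca : a ≠ c := by rintro rfl; rw [h3] at hlt; simp at hlt
  have hcb : c ≠ b' := by rintro rfl; rw [h3] at hlt; simp at hlt
  refine ⟨c, lt_of_le_of_ne h1 hca, lt_of_lt_of_le (lt_of_le_of_ne h2 hcb) hb1b, ?_⟩
  rw [hder, eval_mul, h3, mul_zero]

lemma PIVT.mono (h : PIVT R) (f : R[X]) (a b : R) (hab : a < b)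
    (hd : ∀ c, a < c → c < b → 0 < (derivative f).eval c) : f.eval a < f.eval b := by
  obtain ⟨c, h1, h2, h3⟩ := h.rolle
    (f * C (b - a) - C (f.eval b - f.eval a) * (X - C a) - C (f.eval a * (b - a))) a b hab
    (by simp) (by simp; ring)
  have := hd c h1 h2
  simp at h3
  have : 0 < (derivative f).eval c * (b - a) := mul_pos this (by linarith)
  linarith

lemma poly_large (d : ℕ) : ∀ (f : R[X]), f.natDegree = d + 1 → 0 < f.leadingCoeff →
    ∀ M : R, ∃ N, ∀ x, N ≤ x → M ≤ f.eval x := by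
  induction d with
  | zero =>
    intro f hf hlc M
    rw [leadingCoeff, hf] at hlc
    refine ⟨(M - f.coeff 0) / f.coeff 1, fun x hx => ?_⟩
    rw [eq_X_add_C_of_natDegree_le_one hf.le]
    simp only [eval_add, eval_mul, eval_C, eval_X]
    rw [zero_add] at hlc
    rw [div_le_iff₀ hlc] at hx
    linarith
  | succ d ih =>
    intro f hf hlc M
    have hdeg : f.divX.natDegree = d + 1 := by rw [natDegree_divX_eq_natDegree_tsub_one, hf]; rfl
    obtain ⟨N, hN⟩ := ih f.divX hdeg (by
      rw [leadingCoeff, hdeg, coeff_divX]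
      rw [leadingCoeff, hf] at hlc
      exact hlc) 1
    refine ⟨max N (max 0 (M - f.coeff 0)), fun x hx => ?_⟩
    have h1 := hN x ((le_max_left _ _).trans hx)
    have h2 : 0 ≤ x := (le_max_left _ _).trans ((le_max_right _ _).trans hx)
    have h3 : M - f.coeff 0 ≤ x := (le_max_right _ _).trans ((le_max_right _ _).trans hx)
    have e : f.eval x = f.divX.eval x * x + f.coeff 0 := by
      conv_lhs => rw [← divX_mul_X_add f]
      simp
    rw [e]
    nlinarith

lemma PIVT.pos_at_top (h : PIVT R) (f : R[X]) (y : R)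
    (hd : ∀ c, y ≤ c → 0 < (derivative f).eval c) : ∃ z, y ≤ z ∧ 0 < f.eval z := by
  have hdeg : f.natDegree ≠ 0 := by
    intro h0
    obtain ⟨r, rfl⟩ := Polynomial.natDegree_eq_zero.1 h0
    simpa using hd y le_rfl
  obtain ⟨d, hdd⟩ := Nat.exists_eq_succ_of_ne_zero hdeg
  have hf0 : f ≠ 0 := by rintro rfl; simp at hdeg
  rcases lt_or_gt_of_ne (leadingCoeff_ne_zero.2 hf0) with hlc | hlc
  · exfalso
    obtain ⟨N, hN⟩ := poly_large d (-f) (by rw [natDegree_neg, hdd])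
      (by rw [leadingCoeff_neg]; linarith) (-f.eval y + 1)
    have h1 := hN (max N (y + 1)) (le_max_left _ _)
    have h2 : y + 1 ≤ max N (y + 1) := le_max_right _ _
    have := h.mono f y (max N (y + 1)) (by linarith) (fun c hc _ => hd c hc.le)
    rw [eval_neg] at h1
    linarith
  · obtain ⟨N, hN⟩ := poly_large d f hdd hlc 1
    exact ⟨max N y, le_max_right _ _, lt_of_lt_of_le one_pos (hN _ (le_max_left _ _))⟩

/-- `c` labels the cells cut out by the finite set `Z`. -/
structure Good {Λ : Type*} [LinearOrder Λ] (Z : Set R) (c : R → Λ) : Prop where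
  mono : Monotone c
  fin : Z.Finite
  sing : ∀ z ∈ Z, ∀ x, c x = c z → x = z
  sep : ∀ x x', x < x' → c x ≠ c x' → ∃ z ∈ Z, x ≤ z ∧ z ≤ x'

lemma Good.neg {Λ : Type*} [LinearOrder Λ] {Z : Set R} {c : R → Λ} (h : Good Z c) :
    Good (Λ := Λᵒᵈ) {x | -x ∈ Z} (fun x => OrderDual.toDual (c (-x))) where
  mono := fun x y hxy => OrderDual.toDual_le_toDual.2 (h.mono (neg_le_neg hxy))
  fin := by
    have : {x | -x ∈ Z} = (fun x => -x) '' Z := by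
      ext x
      constructor
      · intro hx; exact ⟨-x, hx, by simp⟩
      · rintro ⟨y, hy, rfl⟩; simpa using hy
    rw [this]
    exact h.fin.image _
  sing := fun z hz x hx => neg_injective (h.sing (-z) hz (-x) (OrderDual.toDual.injective hx))
  sep := fun x x' hxx hne => by
    obtain ⟨z, hz, h1, h2⟩ := h.sep (-x') (-x) (neg_lt_neg hxx)
      (fun e => hne (by rw [e]))
    exact ⟨-z, by simpa using hz, by linarith, by linarith⟩

variable {R' : Type*} [Field R'] [LinearOrder R'] [IsStrictOrderedRing R']

lemma cell_pos {Λ : Type*} [LinearOrder Λ] (h1 : PIVT R) (h2 : PIVT R')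
    {Z : Set R} {Z' : Set R'} {c : R → Λ} {c' : R' → Λ} (g1 : Good Z c) (g2 : Good Z' c')
    (s1 : ∀ x, ∃ y, c' y = c x) (s2 : ∀ y, ∃ x, c x = c' y)
    (F : R[X]) (F' : R'[X]) (x : R) (y : R') (e : c x = c' y)
    (nr : ∀ u, c' u = c' y → u ∉ Z')
    (d1 : ∀ u, c u = c x → 0 < (derivative F).eval u)
    (d2 : ∀ u, c' u = c' y → 0 < (derivative F').eval u)
    (H : ∀ z ∈ Z', ∀ w, c w = c' z → w ∈ Z ∧ (0 < F.eval w → 0 < F'.eval z))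
    (hx : 0 ≤ F.eval x) : ∃ u, c' u = c' y ∧ 0 < F'.eval u := by
  by_cases hb : ∀ u, y ≤ u → c' u = c' y
  · obtain ⟨z, hz, hz'⟩ := h2.pos_at_top F' y (fun u hu => d2 u (hb u hu))
    exact ⟨z, hb z hz, hz'⟩
  push Not at hb
  obtain ⟨v, hyv, hv⟩ := hb
  have hyv' : y < v := lt_of_le_of_ne hyv (by rintro rfl; exact hv rfl)
  -- least element of `Z'` above `y`
  have hyZ : ∀ z ∈ Z', y ≤ z → y < z := by
    intro z hz hyz
    refine lt_of_le_of_ne hyz ?_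
    rintro rfl
    exact nr _ rfl hz
  obtain ⟨z1, hz1, hz1y, -⟩ := g2.sep y v hyv' (Ne.symm hv)
  have hfin : (Z' ∩ {z | y < z}).Finite := g2.fin.inter_of_left _
  obtain ⟨z, ⟨hzZ, hzy⟩, hzmin⟩ := Set.exists_min_image _ id hfin ⟨z1, hz1, hyZ z1 hz1 hz1y⟩
  have hzmin' : ∀ w ∈ Z', y ≤ w → z ≤ w := fun w hw hyw => hzmin w ⟨hw, hyZ w hw hyw⟩
  replace hzy : y < z := hzy
  have hcell : ∀ u, y ≤ u → u < z → c' u = c' y := by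
    intro u hu huz
    by_contra hne
    obtain ⟨w, hw, hw1, hw2⟩ := g2.sep y u
      (lt_of_le_of_ne hu (by rintro rfl; exact hne rfl)) (Ne.symm hne)
    have := hzmin' w hw hw1
    linarith
  have hcz : c' y < c' z := lt_of_le_of_ne (g2.mono hzy.le) (fun e => nr z e.symm hzZ)
  obtain ⟨w, hw⟩ := s2 z
  obtain ⟨hwZ, hwF⟩ := H z hzZ w hw
  have hxw : x < w := by
    by_contra hcon
    push Not at hcon
    have := g1.mono hcon
    rw [hw, e] at this
    exact absurd hcz (not_lt.2 this)
  have hcell1 : ∀ u, x ≤ u → u < w → c u = c x := by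
    intro u hu huw
    by_contra hne
    have hlt : c x < c u := lt_of_le_of_ne (g1.mono hu) (Ne.symm hne)
    have hlt2 : c u < c w := lt_of_le_of_ne (g1.mono huw.le)
      (fun e => huw.ne (g1.sing w hwZ u e))
    obtain ⟨u', hu'⟩ := s1 u
    have k1 : y < u' := by
      by_contra hcon
      push Not at hcon
      have := g2.mono hcon
      rw [hu', ← e] at this
      exact absurd hlt (not_lt.2 this)
    have k2 : u' < z := by
      by_contra hcon
      push Not at hcon
      have := g2.mono hcon
      rw [hu', ← hw] at this
      exact absurd hlt2 (not_lt.2 this)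
    have := hcell u' k1.le k2
    rw [hu', ← e] at this
    exact hne this
  have hFw : 0 < F.eval w :=
    lt_of_le_of_lt hx (h1.mono F x w hxw (fun u hu huw => d1 u (hcell1 u hu.le huw)))
  have hFz := hwF hFw
  by_contra hcon
  push Not at hcon
  have hFy := hcon y rfl
  obtain ⟨ρ, hρ1, hρ2, hρ3⟩ := h2 F' y z hzy.le (mul_nonpos_of_nonpos_of_nonneg hFy hFz.le)
  have hρz : ρ < z := lt_of_le_of_ne hρ2 (by rintro rfl; linarith)
  have := h2.mono F' ρ ((ρ + z) / 2) (by linarith)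
    (fun u hu1 hu2 => d2 u (hcell u (by linarith) (by linarith)))
  have h4 := hcon ((ρ + z) / 2) (hcell _ (by linarith) (by linarith))
  linarith

lemma cell_neg {Λ : Type*} [LinearOrder Λ] (h1 : PIVT R) (h2 : PIVT R')
    {Z : Set R} {Z' : Set R'} {c : R → Λ} {c' : R' → Λ} (g1 : Good Z c) (g2 : Good Z' c')
    (s1 : ∀ x, ∃ y, c' y = c x) (s2 : ∀ y, ∃ x, c x = c' y)
    (F : R[X]) (F' : R'[X]) (x : R) (y : R') (e : c x = c' y)
    (nr : ∀ u, c' u = c' y → u ∉ Z')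
    (d1 : ∀ u, c u = c x → 0 < (derivative F).eval u)
    (d2 : ∀ u, c' u = c' y → 0 < (derivative F').eval u)
    (H : ∀ z ∈ Z', ∀ w, c w = c' z → w ∈ Z ∧ (F.eval w < 0 → F'.eval z < 0))
    (hx : F.eval x ≤ 0) : ∃ u, c' u = c' y ∧ F'.eval u < 0 := by
  obtain ⟨u, hu1, hu2⟩ := cell_pos h1 h2 g1.neg g2.neg
    (fun x => by
      obtain ⟨y, hy⟩ := s1 (-x)
      exact ⟨-y, by simp [hy]⟩)
    (fun y => by
      obtain ⟨x, hx⟩ := s2 (-y)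
      exact ⟨-x, by simp [hx]⟩)
    (-(F.comp (-X))) (-(F'.comp (-X))) (-x) (-y) (by simp [e])
    (fun u hu => by
      refine nr (-u) ?_
      simpa using hu)
    (fun u hu => by
      have := d1 (-u) (by simpa using hu)
      simpa [derivative_comp] using this)
    (fun u hu => by
      have := d2 (-u) (by simpa using hu)
      simpa [derivative_comp] using this)
    (fun z hz w hw => by
      have := H (-z) hz (-w) (by simpa using hw)
      refine ⟨this.1, ?_⟩
      simpa using this.2)
    (by simpa using hx)
  exact ⟨-u, by simpa using hu1, by simpa using hu2⟩

lemma cell_sign {Λ : Type*} [LinearOrder Λ] (h1 : PIVT R) (h2 : PIVT R')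
    {Z : Set R} {Z' : Set R'} {c : R → Λ} {c' : R' → Λ} (g1 : Good Z c) (g2 : Good Z' c')
    (s1 : ∀ x, ∃ y, c' y = c x) (s2 : ∀ y, ∃ x, c x = c' y)
    (F : R[X]) (F' : R'[X]) (x : R) (y : R') (e : c x = c' y)
    (nr : ∀ u, c' u = c' y → u ∉ Z')
    (d1 : ∀ u, c u = c x → 0 < (derivative F).eval u)
    (d2 : ∀ u, c' u = c' y → 0 < (derivative F').eval u)
    (H : ∀ z ∈ Z', ∀ w, c w = c' z → w ∈ Z ∧ SignType.sign (F.eval w) = SignType.sign (F'.eval z)) :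
    ∃ u, c' u = c' y ∧ SignType.sign (F.eval x) = SignType.sign (F'.eval u) := by
  have hp := cell_pos h1 h2 g1 g2 s1 s2 F F' x y e nr d1 d2 (fun z hz w hw => by
    obtain ⟨k1, k2⟩ := H z hz w hw
    refine ⟨k1, fun h => ?_⟩
    rw [sign_pos h] at k2
    exact sign_eq_one_iff.1 k2.symm)
  have hn := cell_neg h1 h2 g1 g2 s1 s2 F F' x y e nr d1 d2 (fun z hz w hw => by
    obtain ⟨k1, k2⟩ := H z hz w hw
    refine ⟨k1, fun h => ?_⟩
    rw [sign_neg h] at k2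
    exact sign_eq_neg_one_iff.1 k2.symm)
  rcases lt_trichotomy (F.eval x) 0 with hx | hx | hx
  · obtain ⟨u, hu, hu'⟩ := hn hx.le
    exact ⟨u, hu, by rw [sign_neg hx, sign_neg hu']⟩
  · obtain ⟨u, hu, hu'⟩ := hn hx.le
    obtain ⟨v, hv, hv'⟩ := hp hx.ge
    have huv : u < v := by
      by_contra hcon
      push Not at hcon
      rcases hcon.lt_or_eq with hcon | hcon
      · have := h2.mono F' v u hcon (fun t ht1 ht2 => d2 t (le_antisymm
          (by rw [← hu]; exact g2.mono ht2.le) (by rw [← hv]; exact g2.mono ht1.le)))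
        linarith
      · rw [hcon] at hv'; linarith
    obtain ⟨r, hr1, hr2, hr3⟩ := h2 F' u v huv.le (mul_nonpos_of_nonpos_of_nonneg hu'.le hv'.le)
    exact ⟨r, le_antisymm (by rw [← hv]; exact g2.mono hr2) (by rw [← hu]; exact g2.mono hr1),
      by rw [hx, hr3, sign_zero, sign_zero]⟩
  · obtain ⟨u, hu, hu'⟩ := hp hx.le
    exact ⟨u, hu, by rw [sign_pos hx, sign_pos hu']⟩

end PolyCalc

/-! ### Cohen-Hörmander elimination -/

set_option linter.unusedSectionVars false
section Elimination
open Polynomial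

variable {A : Type*} [CommRing A]

lemma exists_prem (g : A[X]) (hg : 1 ≤ g.natDegree) : ∀ (d : ℕ) (f : A[X]), f.natDegree ≤ d →
    ∃ (r q : A[X]) (k : ℕ), C (g.leadingCoeff ^ (2 * k)) * f = g * q + r ∧
      r.natDegree < g.natDegree := by
  intro d
  induction d with
  | zero =>
    intro f hf
    exact ⟨f, 0, 0, by simp, by omega⟩
  | succ d ih =>
    intro f hf
    by_cases hlt : f.natDegree < g.natDegree
    · exact ⟨f, 0, 0, by simp, hlt⟩
    push Not at hlt
    by_cases hfd : f.natDegree ≤ d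
    · exact ih f hfd
    have hfd' : f.natDegree = d + 1 := by omega
    let m := g * (C (g.leadingCoeff * f.leadingCoeff) * X ^ (f.natDegree - g.natDegree))
    let f1 := C (g.leadingCoeff ^ 2) * f - m
    have hm : m.natDegree ≤ d + 1 := by
      refine natDegree_mul_le.trans ?_
      have := natDegree_C_mul_X_pow_le (g.leadingCoeff * f.leadingCoeff)
        (f.natDegree - g.natDegree)
      omega
    have hf1 : f1.natDegree ≤ d + 1 := by
      refine (natDegree_sub_le _ _).trans (max_le ((natDegree_C_mul_le _ _).trans hf) hm)
    have hmc : m.coeff (d + 1) = g.leadingCoeff * (g.leadingCoeff * f.leadingCoeff) := by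
      have e : m = (g * C (g.leadingCoeff * f.leadingCoeff)) * X ^ (f.natDegree - g.natDegree) := by
        simp only [m]; ring
      have e2 : d + 1 = g.natDegree + (f.natDegree - g.natDegree) := by omega
      rw [e, e2, coeff_mul_X_pow, coeff_mul_C]
      rfl
    have hc : f1.coeff (d + 1) = 0 := by
      simp only [f1, coeff_sub, coeff_C_mul]
      rw [hmc]
      have : f.coeff (d + 1) = f.leadingCoeff := by rw [leadingCoeff, hfd']
      rw [this]; ring
    have hf1d : f1.natDegree ≤ d := by
      by_contra hcon
      have e : f1.natDegree = d + 1 := by omega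
      have h0 : f1.leadingCoeff = 0 := by rw [leadingCoeff, e, hc]
      rw [leadingCoeff_eq_zero] at h0
      rw [h0] at e
      simp at e
    obtain ⟨r, q, k, h1, h2⟩ := ih f1 hf1d
    refine ⟨r, q + C (g.leadingCoeff ^ (2 * k)) *
      (C (g.leadingCoeff * f.leadingCoeff) * X ^ (f.natDegree - g.natDegree)), k + 1, ?_, h2⟩
    have e : C (g.leadingCoeff ^ (2 * (k + 1))) * f =
        C (g.leadingCoeff ^ (2 * k)) * f1 + C (g.leadingCoeff ^ (2 * k)) * m := by
      simp only [f1]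
      rw [mul_add 2, pow_add, C_mul]
      ring
    rw [e, h1]
    simp only [m]
    ring

open Classical in
/-- Pseudo-remainder. -/
noncomputable def prem (f g : A[X]) : A[X] :=
  if h : 1 ≤ g.natDegree then (exists_prem g h f.natDegree f le_rfl).choose else 0

lemma prem_spec (f g : A[X]) (h : 1 ≤ g.natDegree) :
    (∃ (q : A[X]) (k : ℕ), C (g.leadingCoeff ^ (2 * k)) * f = g * q + prem f g) ∧
      (prem f g).natDegree < g.natDegree := by
  obtain ⟨q, k, h1, h2⟩ := (exists_prem g h f.natDegree f le_rfl).choose_spec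
  rw [prem, dif_pos h]
  exact ⟨⟨q, k, h1⟩, h2⟩

/-- Closed under the Cohen-Hörmander operations. -/
structure ChClosed (O T : Finset A[X]) : Prop where
  der : ∀ f ∈ O, 1 ≤ f.natDegree → derivative f ∈ T
  erase : ∀ f ∈ O, 1 ≤ f.natDegree → f.eraseLead ∈ T
  rem : ∀ f ∈ O, ∀ g ∈ O, 1 ≤ g.natDegree → g.natDegree ≤ f.natDegree → prem f g ∈ T

lemma erase_lt (f : A[X]) (h : 1 ≤ f.natDegree) : f.eraseLead.natDegree < f.natDegree := by
  have := f.eraseLead_natDegree_le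
  omega

open Classical in
lemma exists_closure (d : ℕ) : ∀ (O N : Finset A[X]), ChClosed O (O ∪ N) →
    (∀ f ∈ N, f.natDegree < d) → ∃ T : Finset A[X], O ∪ N ⊆ T ∧ ChClosed T T := by
  induction d with
  | zero =>
    intro O N h hN
    have : N = ∅ := by
      apply Finset.eq_empty_of_forall_notMem
      intro f hf
      exact absurd (hN f hf) (by omega)
    subst this
    rw [Finset.union_empty] at h
    exact ⟨O, by simp, h⟩
  | succ d ih =>
    intro O N h hN
    let N1 := N.filter (fun f => 1 ≤ f.natDegree)
    let PP := ((O ∪ N) ×ˢ (O ∪ N)).filter (fun p : A[X] × A[X] => (p.1 ∈ N ∨ p.2 ∈ N) ∧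
      1 ≤ p.2.natDegree ∧ p.2.natDegree ≤ p.1.natDegree)
    let N' := N1.image derivative ∪ N1.image eraseLead ∪ PP.image (fun p => prem p.1 p.2)
    obtain ⟨T, hT, hT'⟩ := ih (O ∪ N) N'
      ⟨fun f hf h1 => by
        rcases Finset.mem_union.1 hf with hf | hf
        · exact Finset.mem_union_left _ (h.der f hf h1)
        · refine Finset.mem_union_right _ (Finset.mem_union_left _ (Finset.mem_union_left _ ?_))
          exact Finset.mem_image_of_mem _ (Finset.mem_filter.2 ⟨hf, h1⟩),
       fun f hf h1 => by
        rcases Finset.mem_union.1 hf with hf | hf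
        · exact Finset.mem_union_left _ (h.erase f hf h1)
        · refine Finset.mem_union_right _ (Finset.mem_union_left _ (Finset.mem_union_right _ ?_))
          exact Finset.mem_image_of_mem _ (Finset.mem_filter.2 ⟨hf, h1⟩),
       fun f hf g hg h1 h2 => by
        by_cases hfg : f ∈ N ∨ g ∈ N
        · refine Finset.mem_union_right _ (Finset.mem_union_right _ ?_)
          exact Finset.mem_image.2 ⟨(f, g), Finset.mem_filter.2
            ⟨Finset.mem_product.2 ⟨hf, hg⟩, hfg, h1, h2⟩, rfl⟩
        · push Not at hfg
          exact Finset.mem_union_left _ (h.rem f ((Finset.mem_union.1 hf).resolve_right hfg.1)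
            g ((Finset.mem_union.1 hg).resolve_right hfg.2) h1 h2)⟩
      (by
        intro f hf
        rcases Finset.mem_union.1 hf with hf | hf
        · rcases Finset.mem_union.1 hf with hf | hf
          · obtain ⟨g, hg, rfl⟩ := Finset.mem_image.1 hf
            obtain ⟨hg, h1⟩ := Finset.mem_filter.1 hg
            have := hN g hg
            have := natDegree_derivative_lt (p := g) (by omega)
            omega
          · obtain ⟨g, hg, rfl⟩ := Finset.mem_image.1 hf
            obtain ⟨hg, h1⟩ := Finset.mem_filter.1 hg
            have := hN g hg
            have := erase_lt g h1
            omega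
        · obtain ⟨⟨p, g⟩, hg, rfl⟩ := Finset.mem_image.1 hf
          obtain ⟨-, h0, h1, h2⟩ := Finset.mem_filter.1 hg
          simp only at h0 h1 h2 ⊢
          have := (prem_spec p g h1).2
          rcases h0 with h0 | h0
          · have := hN p h0
            omega
          · have := hN g h0
            omega)
    exact ⟨T, Finset.subset_union_left.trans hT, hT'⟩

lemma exists_closed (Q : Finset A[X]) : ∃ T : Finset A[X], Q ⊆ T ∧ ChClosed T T := by
  classical
  obtain ⟨T, h1, h2⟩ := exists_closure (Q.sup natDegree + 1) ∅ Q
    ⟨by simp, by simp, by simp⟩ (fun f hf => Nat.lt_succ_of_le (Finset.le_sup (f := natDegree) hf))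
  exact ⟨T, by simpa using h1, h2⟩

section Refine
variable {R : Type*} [Field R] [LinearOrder R] [IsStrictOrderedRing R]

lemma sign_mono_of_le {a b : R} (h : a ≤ b) : SignType.sign a ≤ SignType.sign b :=
  (SignType.sign (α := R)).monotone h

lemma mul_nonpos_of_sign_ne {a b : R} (h : SignType.sign a ≠ SignType.sign b) : a * b ≤ 0 := by
  rcases lt_trichotomy a 0 with ha | ha | ha
  · rcases lt_trichotomy b 0 with hb | hb | hb
    · rw [sign_neg ha, sign_neg hb] at h; exact absurd rfl h
    · simp [hb]
    · exact (mul_neg_of_neg_of_pos ha hb).le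
  · simp [ha]
  · rcases lt_trichotomy b 0 with hb | hb | hb
    · exact (mul_neg_of_pos_of_neg ha hb).le
    · simp [hb]
    · rw [sign_pos ha, sign_pos hb] at h; exact absurd rfl h

lemma Good.refine {Λ : Type*} [LinearOrder Λ] {Z : Set R} {c : R → Λ} (h : PIVT R)
    (g : Good Z c) (F : R[X]) (hF : F ≠ 0)
    (hsg : ∀ x x', c x = c x' → SignType.sign ((derivative F).eval x) =
      SignType.sign ((derivative F).eval x'))
    (hDZ : ∀ x, (derivative F).eval x = 0 → x ∈ Z) :
    Good (Λ := Λ ×ₗ SignType) (Z ∪ {x | F.eval x = 0})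
      (fun x => toLex (c x, SignType.sign ((derivative F).eval x) * SignType.sign (F.eval x))) where
  mono := by
    intro x x' hxx
    rw [Prod.Lex.toLex_le_toLex]
    rcases (g.mono hxx).lt_or_eq with hlt | heq
    · exact Or.inl hlt
    refine Or.inr ⟨heq, ?_⟩
    rcases hxx.lt_or_eq with hxx' | rfl
    swap
    · exact le_rfl
    have hc : ∀ t, x < t → t < x' → c t = c x := fun t h1 h2 =>
      le_antisymm (heq ▸ g.mono h2.le) (g.mono h1.le)
    simp only
    rw [← hsg x x' heq]
    rcases lt_trichotomy ((derivative F).eval x) 0 with hd | hd | hd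
    · have := h.mono (-F) x x' hxx' (fun t h1 h2 => by
        have := hsg t x (hc t h1 h2)
        rw [sign_neg hd, sign_eq_neg_one_iff] at this
        simpa using this)
      rw [eval_neg, eval_neg] at this
      rw [← sign_mul, ← sign_mul]
      exact sign_mono_of_le (by nlinarith)
    · rw [hd]; simp
    · have := h.mono F x x' hxx' (fun t h1 h2 => by
        have := hsg t x (hc t h1 h2)
        rwa [sign_pos hd, sign_eq_one_iff] at this)
      rw [← sign_mul, ← sign_mul]
      exact sign_mono_of_le (by nlinarith)
  fin := by
    refine g.fin.union ?_
    have : {x | F.eval x = 0} = (F.roots.toFinset : Set R) := by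
      ext x; simp [hF]
    rw [this]
    exact Finset.finite_toSet _
  sing := by
    intro z hz x hx
    have hx' := toLex.injective hx
    rw [Prod.mk.injEq] at hx'
    obtain ⟨h1, h2⟩ := hx'
    rcases hz with hz | hz
    · exact g.sing z hz x h1
    by_cases hD : (derivative F).eval z = 0
    · exact g.sing z (hDZ z hD) x h1
    have hs := hsg x z h1
    have hDx : (derivative F).eval x ≠ 0 := by
      intro h0
      rw [h0, sign_zero] at hs
      exact hD (sign_eq_zero_iff.1 hs.symm)
    have hz' : F.eval z = 0 := hz
    rw [hz', sign_zero, mul_zero, ← sign_mul, sign_eq_zero_iff] at h2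
    have hFx : F.eval x = 0 := (mul_eq_zero.1 h2).resolve_left hDx
    by_contra hne
    have key : ∃ t, c t = c z ∧ (derivative F).eval t = 0 := by
      rcases lt_or_gt_of_ne hne with hlt | hlt
      · obtain ⟨t, t1, t2, t3⟩ := h.rolle F x z hlt hFx hz'
        exact ⟨t, le_antisymm (g.mono t2.le) (h1 ▸ g.mono t1.le), t3⟩
      · obtain ⟨t, t1, t2, t3⟩ := h.rolle F z x hlt hz' hFx
        exact ⟨t, le_antisymm (h1 ▸ g.mono t2.le) (g.mono t1.le), t3⟩
    obtain ⟨t, t1, t2⟩ := key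
    have := hsg t z t1
    rw [t2, sign_zero] at this
    exact hD (sign_eq_zero_iff.1 this.symm)
  sep := by
    intro x x' hxx hne
    by_cases hc : c x = c x'
    · have hs := hsg x x' hc
      have hFs : SignType.sign (F.eval x) ≠ SignType.sign (F.eval x') := by
        intro e
        apply hne
        rw [hc, hs, e]
      obtain ⟨z, z1, z2, z3⟩ := h F x x' hxx.le (mul_nonpos_of_sign_ne hFs)
      exact ⟨z, Or.inr z3, z1, z2⟩
    · obtain ⟨z, hz, h1, h2⟩ := g.sep x x' hxx hc
      exact ⟨z, Or.inl hz, h1, h2⟩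

end Refine

section Correspondence

variable {R₁ : Type*} [Field R₁] [LinearOrder R₁] [IsStrictOrderedRing R₁]
variable {R₂ : Type*} [Field R₂] [LinearOrder R₂] [IsStrictOrderedRing R₂]

/-- Roots of the nonzero specializations of elements of `W`. -/
def rootSet' {R : Type*} [Field R] (φ : A →+* R) (W : Set A[X]) : Set R :=
  {x | ∃ g ∈ W, g.map φ ≠ 0 ∧ (g.map φ).eval x = 0}

/-- Sign of the specialization. -/
noncomputable def sg {R : Type*} [Field R] [LinearOrder R] (φ : A →+* R) (f : A[X]) (x : R) : SignType :=
  SignType.sign ((f.map φ).eval x)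

/-- Cell correspondence. -/
structure Corr {Λ : Type*} [LinearOrder Λ] (φ₁ : A →+* R₁) (φ₂ : A →+* R₂) (W : Set A[X])
    (c₁ : R₁ → Λ) (c₂ : R₂ → Λ) : Prop where
  g₁ : Good (rootSet' φ₁ W) c₁
  g₂ : Good (rootSet' φ₂ W) c₂
  s₁ : ∀ x, ∃ y, c₂ y = c₁ x
  s₂ : ∀ y, ∃ x, c₁ x = c₂ y
  sgn : ∀ x y, c₁ x = c₂ y → ∀ f ∈ W, sg φ₁ f x = sg φ₂ f y

lemma Corr.symm {Λ : Type*} [LinearOrder Λ] {φ₁ : A →+* R₁} {φ₂ : A →+* R₂} {W : Set A[X]}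
    {c₁ : R₁ → Λ} {c₂ : R₂ → Λ} (h : Corr φ₁ φ₂ W c₁ c₂) : Corr φ₂ φ₁ W c₂ c₁ :=
  ⟨h.g₂, h.g₁, h.s₂, h.s₁, fun y x e f hf => (h.sgn x y e.symm f hf).symm⟩

lemma map_erase {R : Type*} [Field R] (φ : A →+* R) (f : A[X]) (h : φ f.leadingCoeff = 0) :
    f.map φ = f.eraseLead.map φ := by
  have e := congrArg (fun p => p.map φ) (eraseLead_add_C_mul_X_pow f)
  simp only [Polynomial.map_add, Polynomial.map_mul, map_C, h, C_0, zero_mul, add_zero] at e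
  exact e.symm

lemma map_ne_zero_of_lc {R : Type*} [Field R] (φ : A →+* R) (f : A[X])
    (h : φ f.leadingCoeff ≠ 0) : f.map φ ≠ 0 := by
  intro h0
  apply h
  rw [leadingCoeff, ← coeff_map, h0, coeff_zero]

lemma map_zero_of (T : Finset A[X]) (hT : ChClosed T T) (φ₁ : A →+* R₁) (φ₂ : A →+* R₂)
    (hs : ∀ f ∈ T, φ₁ f.leadingCoeff = 0 → φ₂ f.leadingCoeff = 0) :
    ∀ (d : ℕ), ∀ f ∈ T, f.natDegree ≤ d → f.map φ₁ = 0 → f.map φ₂ = 0 := by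
  intro d
  induction d with
  | zero =>
    intro f hf hd h0
    have hlc : φ₁ f.leadingCoeff = 0 := by
      by_contra h; exact map_ne_zero_of_lc φ₁ f h h0
    have h2 := hs f hf hlc
    obtain ⟨a, rfl⟩ := natDegree_eq_zero.1 (Nat.le_zero.1 hd)
    rw [leadingCoeff_C] at h2
    simp [h2]
  | succ d ih =>
    intro f hf hd h0
    by_cases h1 : 1 ≤ f.natDegree
    · have hlc : φ₁ f.leadingCoeff = 0 := by
        by_contra h; exact map_ne_zero_of_lc φ₁ f h h0
      have h2 := hs f hf hlc
      rw [map_erase φ₂ f h2]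
      have := erase_lt f h1
      refine ih _ (hT.erase f hf h1) (by omega) ?_
      rw [← map_erase φ₁ f hlc, h0]
    · exact ih f hf (by omega) h0

lemma derivative_map_ne {R : Type*} [Field R] [LinearOrder R] [IsStrictOrderedRing R]
    {φ : A →+* R} {f : A[X]} (h1 : 1 ≤ f.natDegree)
    (hlc : φ f.leadingCoeff ≠ 0) : (derivative f).map φ ≠ 0 := by
  intro h0
  have e := congrArg (fun p => p.coeff (f.natDegree - 1)) h0
  simp only [coeff_map, coeff_derivative, coeff_zero, map_mul] at e
  rw [Nat.sub_add_cancel h1] at e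
  rcases mul_eq_zero.1 e with e | e
  · exact hlc e
  · rw [map_add, map_natCast, map_one] at e
    exact absurd e (by positivity)

/-- A root of some nonzero specialization is a root of one of nonvanishing leading coefficient. -/
lemma exists_lc {R : Type*} [Field R] (φ : A →+* R) (W : Set A[X])
    (hW : ∀ f ∈ W, 1 ≤ f.natDegree → f.eraseLead ∈ W) (x : R) :
    ∀ (d : ℕ), ∀ g ∈ W, g.natDegree ≤ d → g.map φ ≠ 0 → (g.map φ).eval x = 0 →
      ∃ g ∈ W, 1 ≤ g.natDegree ∧ φ g.leadingCoeff ≠ 0 ∧ (g.map φ).eval x = 0 := by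
  intro d
  induction d with
  | zero =>
    intro g hg hd h0 hx
    exfalso
    obtain ⟨a, rfl⟩ := natDegree_eq_zero.1 (Nat.le_zero.1 hd)
    rw [map_C, eval_C] at hx
    simp [hx] at h0
  | succ d ih =>
    intro g hg hd h0 hx
    by_cases h1 : 1 ≤ g.natDegree
    · by_cases hlc : φ g.leadingCoeff = 0
      · rw [map_erase φ g hlc] at h0 hx
        have := erase_lt g h1
        exact ih _ (hW g hg h1) (by omega) h0 hx
      · exact ⟨g, hg, h1, hlc, hx⟩
    · exact ih g hg (by omega) h0 hx

lemma sg_prem {R : Type*} [Field R] [LinearOrder R] [IsStrictOrderedRing R] (φ : A →+* R)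
    (f g : A[X]) (h1 : 1 ≤ g.natDegree)
    (hlc : φ g.leadingCoeff ≠ 0) (x : R) (hx : (g.map φ).eval x = 0) :
    sg φ f x = sg φ (prem f g) x := by
  obtain ⟨⟨q, k, e⟩, -⟩ := prem_spec f g h1
  have e2 := congrArg (fun p => (p.map φ).eval x) e
  simp only [Polynomial.map_mul, Polynomial.map_add, map_C, eval_mul, eval_add, eval_C, hx,
    zero_mul, zero_add] at e2
  have hp : 0 < φ (g.leadingCoeff ^ (2 * k)) := by
    rw [pow_mul, map_pow, map_pow]
    exact pow_pos (by positivity) k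
  rw [sg, sg, ← e2, sign_mul, sign_pos hp, one_mul]

/-- The data needed for one refinement step. -/
structure StepData (T : Finset A[X]) (W : Set A[X]) (φ₁ : A →+* R₁) (φ₂ : A →+* R₂)
    (f : A[X]) : Prop where
  hT : ChClosed T T
  hWT : ∀ g ∈ W, g ∈ T
  down : ∀ g ∈ T, ∀ h ∈ W, g.natDegree < h.natDegree → g ∈ W
  hs : ∀ g ∈ T, SignType.sign (φ₁ g.leadingCoeff) = SignType.sign (φ₂ g.leadingCoeff)
  hf : f ∈ T
  le : ∀ g ∈ W, g.natDegree ≤ f.natDegree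
  lt : ∀ g ∈ T, g.natDegree < f.natDegree → g ∈ W

lemma StepData.symm {T : Finset A[X]} {W : Set A[X]} {φ₁ : A →+* R₁} {φ₂ : A →+* R₂}
    {f : A[X]} (h : StepData T W φ₁ φ₂ f) : StepData T W φ₂ φ₁ f :=
  ⟨h.hT, h.hWT, h.down, fun g hg => (h.hs g hg).symm, h.hf, h.le, h.lt⟩

variable {Λ : Type*} [LinearOrder Λ] {T : Finset A[X]} {W : Set A[X]} {φ₁ : A →+* R₁}
  {φ₂ : A →+* R₂} {f : A[X]} {c₁ : R₁ → Λ} {c₂ : R₂ → Λ}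

lemma StepData.lc_zero (h : StepData T W φ₁ φ₂ f) (g : A[X]) (hg : g ∈ T) :
    φ₁ g.leadingCoeff = 0 → φ₂ g.leadingCoeff = 0 := by
  intro h0
  have := h.hs g hg
  rw [h0, sign_zero] at this
  exact sign_eq_zero_iff.1 this.symm

lemma StepData.mem_root (h : StepData T W φ₁ φ₂ f) (hc : Corr φ₁ φ₂ W c₁ c₂) (x : R₁) (y : R₂)
    (e : c₁ x = c₂ y) (hx : x ∈ rootSet' φ₁ W) : y ∈ rootSet' φ₂ W := by
  obtain ⟨g, hg, h0, hgx⟩ := hx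
  refine ⟨g, hg, fun h2 => h0 ?_, ?_⟩
  · exact map_zero_of T h.hT φ₂ φ₁ (fun g hg => h.symm.lc_zero g hg) _ g (h.hWT g hg) le_rfl h2
  · have := hc.sgn x y e g hg
    rw [sg, hgx, sign_zero] at this
    exact sign_eq_zero_iff.1 this.symm

lemma StepData.root_sign (h : StepData T W φ₁ φ₂ f) (hc : Corr φ₁ φ₂ W c₁ c₂) (x : R₁) (y : R₂)
    (e : c₁ x = c₂ y) (hx : x ∈ rootSet' φ₁ W) : sg φ₁ f x = sg φ₂ f y := by
  obtain ⟨g, hg, h0, hgx⟩ := hx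
  obtain ⟨g, hg, h1, hlc, hgx⟩ := exists_lc φ₁ W
    (fun g hg h1 => h.down _ (h.hT.erase g (h.hWT g hg) h1) g hg (erase_lt g h1)) x _ g hg le_rfl
    h0 hgx
  have hlc2 : φ₂ g.leadingCoeff ≠ 0 := fun h0 => hlc (h.symm.lc_zero g (h.hWT g hg) h0)
  have hgy : (g.map φ₂).eval y = 0 := by
    have := hc.sgn x y e g hg
    rw [sg, hgx, sign_zero] at this
    exact sign_eq_zero_iff.1 this.symm
  rw [sg_prem φ₁ f g h1 hlc x hgx, sg_prem φ₂ f g h1 hlc2 y hgy]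
  refine hc.sgn x y e _ (h.down _ ?_ g hg (prem_spec f g h1).2)
  exact h.hT.rem f h.hf g (h.hWT g hg) h1 (h.le g hg)

lemma StepData.key (h : StepData T W φ₁ φ₂ f) (hc : Corr φ₁ φ₂ W c₁ c₂) (p₁ : PIVT R₁)
    (p₂ : PIVT R₂) (h1 : 1 ≤ f.natDegree) (hlc : φ₁ f.leadingCoeff ≠ 0) (x : R₁) :
    ∃ y, c₂ y = c₁ x ∧ sg φ₁ f x = sg φ₂ f y := by
  have hfW : derivative f ∈ W :=
    h.lt _ (h.hT.der f h.hf h1) (natDegree_derivative_lt (by omega))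
  obtain ⟨y, hy⟩ := hc.s₁ x
  by_cases hx : x ∈ rootSet' φ₁ W
  · exact ⟨y, hy, h.root_sign hc x y hy.symm hx⟩
  have hD0 : (derivative f).map φ₁ ≠ 0 := by
    exact derivative_map_ne h1 hlc
  have hDx : (derivative (f.map φ₁)).eval x ≠ 0 := by
    intro h0
    refine hx ⟨derivative f, hfW, hD0, ?_⟩
    rwa [← derivative_map]
  have nr : ∀ u, c₂ u = c₂ y → u ∉ rootSet' φ₂ W := fun u hu hu' =>
    hx (h.symm.mem_root hc.symm u x (hu.trans hy) hu')
  have hsD : ∀ u v, c₁ u = c₂ v → SignType.sign ((derivative (f.map φ₁)).eval u) =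
      SignType.sign ((derivative (f.map φ₂)).eval v) := by
    intro u v huv
    have := hc.sgn u v huv _ hfW
    rwa [sg, sg, ← derivative_map, ← derivative_map] at this
  have hsx : ∀ u, c₁ u = c₁ x → SignType.sign ((derivative (f.map φ₁)).eval u) =
      SignType.sign ((derivative (f.map φ₁)).eval x) := fun u hu => by
    rw [hsD u y (hu.trans hy.symm), hsD x y hy.symm]
  have hsy : ∀ u, c₂ u = c₂ y → SignType.sign ((derivative (f.map φ₂)).eval u) =
      SignType.sign ((derivative (f.map φ₁)).eval x) := fun u hu =>
    (hsD x u (hu.trans hy).symm).symm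
  rcases lt_or_gt_of_ne hDx with hneg | hpos
  · obtain ⟨u, hu1, hu2⟩ := cell_sign p₁ p₂ hc.g₁ hc.g₂ hc.s₁ hc.s₂ (-(f.map φ₁)) (-(f.map φ₂))
      x y hy.symm nr
      (fun u hu => by
        have := hsx u hu
        rw [sign_neg hneg, sign_eq_neg_one_iff] at this
        simpa using this)
      (fun u hu => by
        have := hsy u hu
        rw [sign_neg hneg, sign_eq_neg_one_iff] at this
        simpa using this)
      (fun z hz w hw => by
        refine ⟨h.symm.mem_root hc.symm z w hw.symm hz, ?_⟩
        have := h.symm.root_sign hc.symm z w hw.symm hz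
        rw [sg, sg] at this
        rw [eval_neg, eval_neg, Left.sign_neg, Left.sign_neg, this])
    refine ⟨u, hu1.trans hy, ?_⟩
    rw [eval_neg, eval_neg, Left.sign_neg, Left.sign_neg, neg_inj] at hu2
    exact hu2
  · obtain ⟨u, hu1, hu2⟩ := cell_sign p₁ p₂ hc.g₁ hc.g₂ hc.s₁ hc.s₂ (f.map φ₁) (f.map φ₂)
      x y hy.symm nr
      (fun u hu => by
        have := hsx u hu
        rwa [sign_pos hpos, sign_eq_one_iff] at this)
      (fun u hu => by
        have := hsy u hu
        rwa [sign_pos hpos, sign_eq_one_iff] at this)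
      (fun z hz w hw => by
        refine ⟨h.symm.mem_root hc.symm z w hw.symm hz, ?_⟩
        exact (h.symm.root_sign hc.symm z w hw.symm hz).symm)
    exact ⟨u, hu1.trans hy, hu2⟩

lemma StepData.same (hc : Corr φ₁ φ₂ W c₁ c₂)
    (z₁ : rootSet' φ₁ (insert f W) = rootSet' φ₁ W) (z₂ : rootSet' φ₂ (insert f W) = rootSet' φ₂ W)
    (hs : ∀ x y, c₁ x = c₂ y → sg φ₁ f x = sg φ₂ f y) : Corr φ₁ φ₂ (insert f W) c₁ c₂ := by
  refine ⟨by rw [z₁]; exact hc.g₁, by rw [z₂]; exact hc.g₂, hc.s₁, hc.s₂, ?_⟩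
  intro x y e g hg
  rcases hg with rfl | hg
  · exact hs x y e
  · exact hc.sgn x y e g hg

lemma rootSet'_insert_of {R : Type*} [Field R] (φ : A →+* R) (W : Set A[X]) (f : A[X])
    (h : ∀ x, f.map φ ≠ 0 → (f.map φ).eval x = 0 → x ∈ rootSet' φ W) :
    rootSet' φ (insert f W) = rootSet' φ W := by
  ext x
  constructor
  · rintro ⟨g, rfl | hg, h0, hx⟩
    · exact h x h0 hx
    · exact ⟨g, hg, h0, hx⟩
  · rintro ⟨g, hg, h0, hx⟩
    exact ⟨g, Or.inr hg, h0, hx⟩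

lemma rootSet'_insert {R : Type*} [Field R] (φ : A →+* R) (W : Set A[X]) (f : A[X])
    (h : f.map φ ≠ 0) :
    rootSet' φ (insert f W) = rootSet' φ W ∪ {x | (f.map φ).eval x = 0} := by
  ext x
  constructor
  · rintro ⟨g, rfl | hg, h0, hx⟩
    · exact Or.inr hx
    · exact Or.inl ⟨g, hg, h0, hx⟩
  · rintro (⟨g, hg, h0, hx⟩ | hx)
    · exact ⟨g, Or.inr hg, h0, hx⟩
    · exact ⟨f, Or.inl rfl, h, hx⟩

lemma StepData.good (h : StepData T W φ₁ φ₂ f) (hc : Corr φ₁ φ₂ W c₁ c₂) (p₁ : PIVT R₁)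
    (h1 : 1 ≤ f.natDegree) (hlc : φ₁ f.leadingCoeff ≠ 0) :
    Good (Λ := Λ ×ₗ SignType) (rootSet' φ₁ (insert f W))
      (fun x => toLex (c₁ x, sg φ₁ (derivative f) x * sg φ₁ f x)) := by
  have hfW : derivative f ∈ W :=
    h.lt _ (h.hT.der f h.hf h1) (natDegree_derivative_lt (by omega))
  have hsx : ∀ u x, c₁ u = c₁ x → SignType.sign ((derivative (f.map φ₁)).eval u) =
      SignType.sign ((derivative (f.map φ₁)).eval x) := fun u x hu => by
    obtain ⟨y, hy⟩ := hc.s₁ x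
    have e1 := hc.sgn u y (hu.trans hy.symm) _ hfW
    have e2 := hc.sgn x y hy.symm _ hfW
    rw [derivative_map]
    exact e1.trans e2.symm
  have := hc.g₁.refine p₁ (f.map φ₁) (map_ne_zero_of_lc φ₁ f hlc) hsx (fun x hx => by
    rw [derivative_map] at hx
    exact ⟨_, hfW, derivative_map_ne h1 hlc, hx⟩)
  rw [rootSet'_insert φ₁ W f (map_ne_zero_of_lc φ₁ f hlc)]
  rw [derivative_map] at this
  exact this

lemma StepData.surj (h : StepData T W φ₁ φ₂ f) (hc : Corr φ₁ φ₂ W c₁ c₂) (p₁ : PIVT R₁)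
    (p₂ : PIVT R₂) (h1 : 1 ≤ f.natDegree) (hlc : φ₁ f.leadingCoeff ≠ 0) (x : R₁) :
    ∃ y, (toLex (c₂ y, sg φ₂ (derivative f) y * sg φ₂ f y) : Λ ×ₗ SignType) =
      toLex (c₁ x, sg φ₁ (derivative f) x * sg φ₁ f x) := by
  have hfW : derivative f ∈ W :=
    h.lt _ (h.hT.der f h.hf h1) (natDegree_derivative_lt (by omega))
  obtain ⟨y, hy, hy'⟩ := h.key hc p₁ p₂ h1 hlc x
  exact ⟨y, by rw [hy, hy', hc.sgn x y hy.symm _ hfW]⟩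

lemma StepData.step (h : StepData T W φ₁ φ₂ f) (hc : Corr φ₁ φ₂ W c₁ c₂) (p₁ : PIVT R₁)
    (p₂ : PIVT R₂) (h1 : 1 ≤ f.natDegree) (hlc : φ₁ f.leadingCoeff ≠ 0) :
    Corr (Λ := Λ ×ₗ SignType) φ₁ φ₂ (insert f W)
      (fun x => toLex (c₁ x, sg φ₁ (derivative f) x * sg φ₁ f x))
      (fun y => toLex (c₂ y, sg φ₂ (derivative f) y * sg φ₂ f y)) := by
  have hlc2 : φ₂ f.leadingCoeff ≠ 0 := fun h0 => hlc (h.symm.lc_zero f h.hf h0)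
  have hfW : derivative f ∈ W :=
    h.lt _ (h.hT.der f h.hf h1) (natDegree_derivative_lt (by omega))
  refine ⟨h.good hc p₁ h1 hlc, h.symm.good hc.symm p₂ h1 hlc2, h.surj hc p₁ p₂ h1 hlc,
    h.symm.surj hc.symm p₂ p₁ h1 hlc2, ?_⟩
  intro x y e g hg
  have e' := toLex.injective e
  rw [Prod.mk.injEq] at e'
  obtain ⟨e1, e2⟩ := e'
  rcases hg with rfl | hg
  · by_cases hD : sg φ₁ (derivative g) x = 0
    · refine h.root_sign hc x y e1 ⟨derivative g, hfW, derivative_map_ne h1 hlc, ?_⟩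
      exact sign_eq_zero_iff.1 hD
    · rw [← hc.sgn x y e1 _ hfW] at e2
      exact mul_left_cancel₀ hD e2
  · exact hc.sgn x y e1 g hg

end Correspondence

section Final

variable {R₁ : Type*} [Field R₁] [LinearOrder R₁] [IsStrictOrderedRing R₁]
variable {R₂ : Type*} [Field R₂] [LinearOrder R₂] [IsStrictOrderedRing R₂]

lemma corr_all (T : Finset A[X]) (hT : ChClosed T T) (φ₁ : A →+* R₁) (φ₂ : A →+* R₂)
    (p₁ : PIVT R₁) (p₂ : PIVT R₂)
    (hs : ∀ g ∈ T, SignType.sign (φ₁ g.leadingCoeff) = SignType.sign (φ₂ g.leadingCoeff)) :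
    ∀ (n : ℕ) (W : Finset A[X]), (∀ g ∈ W, g ∈ T) →
      (∀ f ∈ T, f ∉ W → ∀ g ∈ W, g.natDegree ≤ f.natDegree) →
      T.card ≤ W.card + n →
      (∃ (Λ : Type) (_ : LinearOrder Λ) (c₁ : R₁ → Λ) (c₂ : R₂ → Λ),
        Corr φ₁ φ₂ (W : Set A[X]) c₁ c₂) →
      ∃ (Λ : Type) (_ : LinearOrder Λ) (c₁ : R₁ → Λ) (c₂ : R₂ → Λ),
        Corr φ₁ φ₂ (T : Set A[X]) c₁ c₂ := by
  classical
  intro n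
  induction n with
  | zero =>
    intro W hW _ hcard hc
    rw [Finset.eq_of_subset_of_card_le hW hcard] at hc
    exact hc
  | succ n ih =>
    intro W hWT hord hcard hc
    by_cases hTW : T ⊆ W
    · rw [Finset.Subset.antisymm hWT hTW] at hc
      exact hc
    obtain ⟨f0, hf0T, hf0W⟩ := Finset.not_subset.1 hTW
    obtain ⟨f, hf, hmin⟩ := Finset.exists_min_image (T \ W) natDegree
      ⟨f0, Finset.mem_sdiff.2 ⟨hf0T, hf0W⟩⟩
    obtain ⟨hfT, hfW⟩ := Finset.mem_sdiff.1 hf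
    have sd : StepData T (W : Set A[X]) φ₁ φ₂ f := by
      refine ⟨hT, hWT, ?_, hs, hfT, hord f hfT hfW, ?_⟩
      · intro g hg k hk hlt
        by_contra hgW
        have := hord g hg hgW k hk
        omega
      · intro g hg hlt
        by_contra hgW
        have := hmin g (Finset.mem_sdiff.2 ⟨hg, hgW⟩)
        omega
    refine ih (insert f W) ?_ ?_ ?_ ?_
    · intro g hg
      rcases Finset.mem_insert.1 hg with rfl | hg
      · exact hfT
      · exact hWT g hg
    · intro k hk hkW g hg
      rw [Finset.mem_insert, not_or] at hkW
      rcases Finset.mem_insert.1 hg with rfl | hg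
      · exact hmin k (Finset.mem_sdiff.2 ⟨hk, hkW.2⟩)
      · exact hord k hk hkW.2 g hg
    · rw [Finset.card_insert_of_notMem hfW]
      omega
    obtain ⟨Λ, _, c₁, c₂, hc⟩ := hc
    rw [Finset.coe_insert]
    by_cases h1 : 1 ≤ f.natDegree
    · by_cases hlc : φ₁ f.leadingCoeff = 0
      · have hlc2 := sd.lc_zero f hfT hlc
        have heW : f.eraseLead ∈ W := sd.lt _ (hT.erase f hfT h1) (erase_lt f h1)
        refine ⟨Λ, _, c₁, c₂, StepData.same hc ?_ ?_ ?_⟩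
        · refine rootSet'_insert_of φ₁ _ f (fun x h0 hx => ?_)
          rw [map_erase φ₁ f hlc] at h0 hx
          exact ⟨_, heW, h0, hx⟩
        · refine rootSet'_insert_of φ₂ _ f (fun x h0 hx => ?_)
          rw [map_erase φ₂ f hlc2] at h0 hx
          exact ⟨_, heW, h0, hx⟩
        · intro x y e
          have := hc.sgn x y e _ heW
          rwa [sg, sg, ← map_erase φ₁ f hlc, ← map_erase φ₂ f hlc2] at this
      · exact ⟨_, _, _, _, sd.step hc p₁ p₂ h1 hlc⟩
    · obtain ⟨a, ha⟩ := natDegree_eq_zero.1 (show f.natDegree = 0 by omega)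
      refine ⟨Λ, _, c₁, c₂, StepData.same hc ?_ ?_ ?_⟩
      · refine rootSet'_insert_of φ₁ _ f (fun x h0 hx => ?_)
        rw [← ha, map_C, eval_C] at hx
        rw [← ha, map_C, hx, C_0] at h0
        exact absurd rfl h0
      · refine rootSet'_insert_of φ₂ _ f (fun x h0 hx => ?_)
        rw [← ha, map_C, eval_C] at hx
        rw [← ha, map_C, hx, C_0] at h0
        exact absurd rfl h0
      · intro x y e
        have := hs f hfT
        rw [← ha, leadingCoeff_C] at this
        rw [sg, sg, ← ha, map_C, map_C, eval_C, eval_C, this]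

end Final

theorem cohen_hormander {R₁ : Type*} {R₂ : Type*} [Field R₁] [LinearOrder R₁]
    [IsStrictOrderedRing R₁] [Field R₂] [LinearOrder R₂] [IsStrictOrderedRing R₂]
    (p₁ : PIVT R₁) (p₂ : PIVT R₂) (Q : Finset A[X]) :
    ∃ S : Finset A, ∀ (φ₁ : A →+* R₁) (φ₂ : A →+* R₂),
      (∀ s ∈ S, SignType.sign (φ₁ s) = SignType.sign (φ₂ s)) →
      ∀ x, ∃ y, ∀ q ∈ Q, SignType.sign ((q.map φ₁).eval x) = SignType.sign ((q.map φ₂).eval y) := by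
  classical
  obtain ⟨T, hQT, hT⟩ := exists_closed Q
  refine ⟨T.image leadingCoeff, fun φ₁ φ₂ hs x => ?_⟩
  obtain ⟨Λ, _, c₁, c₂, hc⟩ := corr_all T hT φ₁ φ₂ p₁ p₂
    (fun g hg => hs _ (Finset.mem_image_of_mem _ hg)) T.card ∅ (by simp) (by simp) (by simp)
    ⟨Unit, inferInstance, fun _ => (), fun _ => (), by
      have e1 : rootSet' φ₁ ((∅ : Finset A[X]) : Set A[X]) = ∅ := by
        ext x; simp [rootSet']
      have e2 : rootSet' φ₂ ((∅ : Finset A[X]) : Set A[X]) = ∅ := by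
        ext x; simp [rootSet']
      refine ⟨⟨fun _ _ _ => le_rfl, by rw [e1]; exact Set.finite_empty, by rw [e1]; simp,
        fun _ _ _ h => absurd rfl h⟩, ⟨fun _ _ _ => le_rfl, by rw [e2]; exact Set.finite_empty,
        by rw [e2]; simp, fun _ _ _ h => absurd rfl h⟩, fun _ => ⟨0, rfl⟩, fun _ => ⟨0, rfl⟩,
        by simp⟩⟩
  obtain ⟨y, hy⟩ := hc.s₁ x
  exact ⟨y, fun q hq => hc.sgn x y hy.symm q (hQT hq)⟩

end Elimination

section Transfer

lemma pivt_real : PIVT ℝ := by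
  intro f a b hab h
  have hcont : ContinuousOn (fun x => f.eval x) (Set.Icc a b) := f.continuous.continuousOn
  rcases le_total (f.eval a) (f.eval b) with hle | hle
  · have h0 : (0 : ℝ) ∈ Set.Icc (f.eval a) (f.eval b) := by
      constructor <;> nlinarith
    obtain ⟨c, hc, hc'⟩ := intermediate_value_Icc hab hcont h0
    exact ⟨c, hc.1, hc.2, hc'⟩
  · have h0 : (0 : ℝ) ∈ Set.Icc (f.eval b) (f.eval a) := by
      constructor <;> nlinarith
    obtain ⟨c, hc, hc'⟩ := intermediate_value_Icc' hab hcont h0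
    exact ⟨c, hc.1, hc.2, hc'⟩

lemma sign_real_hom {L : Type*} [Field L] [LinearOrder L] [IsStrictOrderedRing L] (ι : ℝ →+* L)
    (r : ℝ) : SignType.sign (ι r) = SignType.sign r := by
  have hpos : ∀ r : ℝ, 0 < r → 0 < ι r := by
    intro r hr
    have h0 : ι r ≠ 0 := (map_ne_zero ι).2 hr.ne'
    refine lt_of_le_of_ne ?_ (Ne.symm h0)
    rw [← Real.mul_self_sqrt hr.le, map_mul]
    exact mul_self_nonneg _
  rcases lt_trichotomy r 0 with h | h | h
  · have := hpos (-r) (by linarith)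
    rw [map_neg] at this
    rw [sign_neg h, sign_neg (by linarith)]
  · simp [h]
  · rw [sign_pos h, sign_pos (hpos r h)]

theorem real_transfer {L : Type*} [Field L] [LinearOrder L] [IsStrictOrderedRing L]
    (hL : PIVT L) (ι : ℝ →+* L) : ∀ (n : ℕ) (Q : Finset (MvPolynomial (Fin n) ℝ)) (a : Fin n → L),
    ∃ b : Fin n → ℝ, ∀ q ∈ Q, SignType.sign (MvPolynomial.eval₂Hom ι a q) =
      SignType.sign (MvPolynomial.eval b q) := by
  classical
  intro n
  induction n with
  | zero =>
    intro Q a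
    refine ⟨fun i => i.elim0, fun q _ => ?_⟩
    obtain ⟨r, rfl⟩ := MvPolynomial.C_surjective (R := ℝ) (Fin 0) q
    simp [sign_real_hom]
  | succ n ih =>
    intro Q a
    obtain ⟨S, hS⟩ := cohen_hormander (A := MvPolynomial (Fin n) ℝ) hL pivt_real
      (Q.image (MvPolynomial.finSuccEquiv ℝ n))
    obtain ⟨b, hb⟩ := ih S (fun i => a i.succ)
    obtain ⟨y, hy⟩ := hS (MvPolynomial.eval₂Hom ι (fun i => a i.succ)) (MvPolynomial.eval b)
      hb (a 0)
    refine ⟨Fin.cons y b, fun q hq => ?_⟩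
    have := hy _ (Finset.mem_image_of_mem _ hq)
    rw [MvPolynomial.eval_eq_eval_mv_eval', ← this]
    congr 1
    have key : (MvPolynomial.eval₂Hom ι a) =
        (((Polynomial.evalRingHom (a 0)).comp (Polynomial.mapRingHom
          (MvPolynomial.eval₂Hom ι (fun i : Fin n => a i.succ)))).comp
            ((MvPolynomial.finSuccEquiv ℝ n).toAlgHom.toRingHom)) := by
      apply MvPolynomial.ringHom_ext
      · intro r
        simp [MvPolynomial.finSuccEquiv_apply]
      · intro i
        refine Fin.cases ?_ (fun i => ?_) i
        · simp [MvPolynomial.finSuccEquiv_X_zero]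
        · simp [MvPolynomial.finSuccEquiv_X_succ]
    rw [key]
    rfl

end Transfer

section Assembly
open MvPolynomial

lemma isSOS_iff {n : ℕ} (p : MvPolynomial (Fin n) ℝ) : IsSOS p ↔ IsSumSq p := by
  constructor
  · rintro ⟨s, h, rfl⟩
    exact IsSumSq.sum_sq _ _
  · intro h
    induction h with
    | zero => exact ⟨0, fun i => i.elim0, by simp⟩
    | sq_add a hs ih =>
      obtain ⟨s, h, rfl⟩ := ih
      refine ⟨s + 1, Fin.cons a h, ?_⟩
      rw [Fin.sum_univ_succ]
      simp [pow_two]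

lemma isPre_sumSq {A : Type*} [CommRing A] : IsPre {x : A | IsSumSq x} :=
  ⟨fun _ ha _ hb => IsSumSq.add ha hb, fun _ ha _ hb => IsSumSq.mul ha hb,
    fun a => by rw [pow_two]; exact IsSumSq.mul_self a⟩

lemma IsPre.isQM {A : Type*} [CommRing A] {T : Set A} (h : IsPre T) : IsQM T :=
  ⟨h.one_mem, h.add_mem, fun a _ hm => h.mul_mem _ (h.sq_mem a) _ hm⟩

/-- A weak Positivstellensatz for two inequalities. -/
lemma neg_one_mem {n : ℕ} (μ h : MvPolynomial (Fin n) ℝ)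
    (hne : ∀ x : Fin n → ℝ, 0 ≤ eval x μ → 0 ≤ eval x h → False) :
    (-1 : MvPolynomial (Fin n) ℝ) ∈ {x | ∃ a ∈ {x : MvPolynomial (Fin n) ℝ |
      ∃ a ∈ {x | IsSumSq x}, ∃ b ∈ {x | IsSumSq x}, x = a + b * μ},
      ∃ b ∈ {x : MvPolynomial (Fin n) ℝ | ∃ a ∈ {x | IsSumSq x}, ∃ b ∈ {x | IsSumSq x},
      x = a + b * μ}, x = a + b * h} := by
  classical
  by_contra hcon
  have pre1 := (isPre_sumSq (A := MvPolynomial (Fin n) ℝ)).adjoin μ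
  have pre2 := pre1.adjoin h
  obtain ⟨F, _, _, _, φ, hφ⟩ := pre2.exists_hom hcon
  obtain ⟨L, _, _, _, ι, hL, hι⟩ := exists_rc F
  obtain ⟨b, hb⟩ := real_transfer hL ((ι.comp φ).comp C) n {μ, h} (fun i => (ι.comp φ) (X i))
  have e : eval₂Hom ((ι.comp φ).comp C) (fun i => (ι.comp φ) (X i)) = ι.comp φ := by
    apply MvPolynomial.ringHom_ext
    · intro r; simp
    · intro i; simp
  rw [e] at hb
  have hμ0 : 0 ≤ (ι.comp φ) μ := hι _ (hφ _ ⟨μ, ⟨0, isPre_sumSq.zero_mem, 1, isPre_sumSq.one_mem,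
    by simp⟩, 0, pre1.zero_mem, by simp⟩)
  have hh0 : 0 ≤ (ι.comp φ) h := hι _ (hφ _ ⟨0, pre1.zero_mem, 1, pre1.one_mem, by simp⟩)
  refine hne b ?_ ?_
  · rw [← sign_nonneg_iff, ← hb μ (by simp), sign_nonneg_iff]
    exact hμ0
  · rw [← sign_nonneg_iff, ← hb h (by simp), sign_nonneg_iff]
    exact hh0

/-- The preordering generated by `μ` is archimedean. -/
lemma ball_mem {n : ℕ} (μ : MvPolynomial (Fin n) ℝ)
    (hμ : IsCompact {x : Fin n → ℝ | 0 ≤ eval x μ}) :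
    ∃ N : ℝ, algebraMap ℝ (MvPolynomial (Fin n) ℝ) N - ∑ i, (X i) ^ 2 ∈
      {x : MvPolynomial (Fin n) ℝ |
        ∃ a ∈ {x | IsSumSq x}, ∃ b ∈ {x | IsSumSq x}, x = a + b * μ} := by
  have hT := (isPre_sumSq (A := MvPolynomial (Fin n) ℝ)).adjoin μ
  set g : MvPolynomial (Fin n) ℝ := ∑ i, (X i) ^ 2 with hg
  have hcont : Continuous (fun x : Fin n → ℝ => eval x g) := MvPolynomial.continuous_eval g
  obtain ⟨B, hB⟩ := hμ.exists_bound_of_continuousOn hcont.continuousOn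
  obtain ⟨N, hN0, hNB⟩ : ∃ N : ℝ, 0 ≤ N ∧ B < N := ⟨|B| + 1, by positivity, by
    linarith [le_abs_self B]⟩
  have hneg := neg_one_mem μ (g - algebraMap ℝ _ N) (fun x h1 h2 => by
    have := hB x h1
    rw [Real.norm_eq_abs] at this
    have h3 := le_abs_self (eval x g)
    rw [MvPolynomial.algebraMap_eq, eval_sub, eval_C] at h2
    linarith)
  have hgT : g ∈ {x : MvPolynomial (Fin n) ℝ |
        ∃ a ∈ {x | IsSumSq x}, ∃ b ∈ {x | IsSumSq x}, x = a + b * μ} :=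
    ⟨g, IsSumSq.sum_sq _ _, 0, IsSumSq.zero, by simp⟩
  generalize {x : MvPolynomial (Fin n) ℝ |
        ∃ a ∈ {x | IsSumSq x}, ∃ b ∈ {x | IsSumSq x}, x = a + b * μ} = T at hT hneg hgT ⊢
  obtain ⟨q, hq, t, ht, e⟩ := hneg
  set f := algebraMap ℝ (MvPolynomial (Fin n) ℝ) N - g with hf
  have e1 : f * t = 1 + q := by rw [hf]; linear_combination e
  have e2 : (1 + q) * f = t * f ^ 2 := by rw [← e1]; ring
  have hT' := hT.adjoin f
  have harch := arch_of_ball hT'.isQM N ⟨0, hT.zero_mem, 1, hT.one_mem, by rw [hf, hg]; ring⟩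
  obtain ⟨k, hk, τ₁, hτ₁, τ₂, hτ₂, ek⟩ := harch q
  have h1q : 1 + q ∈ T := hT.add_mem _ hT.one_mem _ hq
  have m1 : (1 + q) * (algebraMap ℝ _ k - q) ∈ T := by
    have : (1 + q) * (algebraMap ℝ _ k - q) = (1 + q) * τ₁ + τ₂ * (t * f ^ 2) := by
      rw [ek, ← e2]; ring
    rw [this]
    exact hT.add_mem _ (hT.mul_mem _ h1q _ hτ₁) _
      (hT.mul_mem _ hτ₂ _ (hT.mul_mem _ ht _ (hT.sq_mem f)))
  have m2 : algebraMap ℝ _ (k + k ^ 2 / 4) - q ∈ T := by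
    have := hT.add_mem _ m1 _ (hT.sq_mem (q - algebraMap ℝ _ (k / 2)))
    convert this using 1
    have c1 : algebraMap ℝ (MvPolynomial (Fin n) ℝ) k =
        algebraMap ℝ (MvPolynomial (Fin n) ℝ) (k / 2) +
        algebraMap ℝ (MvPolynomial (Fin n) ℝ) (k / 2) := by
      rw [← map_add]; congr 1; ring
    have c2 : algebraMap ℝ (MvPolynomial (Fin n) ℝ) (k ^ 2 / 4) =
        algebraMap ℝ (MvPolynomial (Fin n) ℝ) (k / 2) ^ 2 := by
      rw [← map_pow]; congr 1; ring
    rw [map_add, c2, c1]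
    ring
  refine ⟨N + N * (k + k ^ 2 / 4), ?_⟩
  have m3 : (1 + q) * f ∈ T := by
    rw [e2]; exact hT.mul_mem _ ht _ (hT.sq_mem f)
  have m4 := hT.add_mem _ (hT.add_mem _ m3 _ (hT.mul_mem _ hq _ hgT)) _
    (hT.isQM.const_mul hN0 m2)
  convert m4 using 1
  rw [map_add, map_mul, hf]
  ring

end Assembly

open MvPolynomial

/-- **Putinar's Positivstellensatz (Theorem 2 of the paper).**
Let `k₁, …, kₘ` be real polynomials in `n` variables (with `k₀ = 1`) such that
`𝒦 = {x : kⱼ(x) ≥ 0 ∀ j}` is compact, and suppose there are SOS polynomials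
`σ₀, …, σₘ` such that `μ = σ₀ + Σⱼ σⱼ kⱼ` has compact superlevel set `{μ ≥ 0}`.
Then every polynomial `p` that is strictly positive on `𝒦` admits a representation
`p = σ̃₀ + Σⱼ σ̃ⱼ kⱼ` with `σ̃₀, …, σ̃ₘ` sums of squares. -/
theorem putinar_positivstellensatz
    {n m : ℕ}
    (k : Fin m → MvPolynomial (Fin n) ℝ)
    (hK : IsCompact {x : Fin n → ℝ | ∀ j, 0 ≤ eval x (k j)})
    (σ₀ : MvPolynomial (Fin n) ℝ) (σ : Fin m → MvPolynomial (Fin n) ℝ)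
    (hσ₀ : IsSOS σ₀) (hσ : ∀ j, IsSOS (σ j))
    (hμ : IsCompact {x : Fin n → ℝ | 0 ≤ eval x (σ₀ + ∑ j, σ j * k j)})
    (p : MvPolynomial (Fin n) ℝ)
    (hp : ∀ x : Fin n → ℝ, (∀ j, 0 ≤ eval x (k j)) → 0 < eval x p) :
    ∃ (τ₀ : MvPolynomial (Fin n) ℝ) (τ : Fin m → MvPolynomial (Fin n) ℝ),
      IsSOS τ₀ ∧ (∀ j, IsSOS (τ j)) ∧ p = τ₀ + ∑ j, τ j * k j := by
  set μ := σ₀ + ∑ j, σ j * k j with hμdef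
  let M : Set (MvPolynomial (Fin n) ℝ) := {x | ∃ (τ₀ : MvPolynomial (Fin n) ℝ)
    (τ : Fin m → MvPolynomial (Fin n) ℝ), IsSumSq τ₀ ∧ (∀ j, IsSumSq (τ j)) ∧
      x = τ₀ + ∑ j, τ j * k j}
  have hM : IsQM M := by
    refine ⟨⟨1, fun _ => 0, IsSumSq.one, fun _ => IsSumSq.zero, by simp⟩, ?_, ?_⟩
    · rintro _ ⟨a, b, ha, hb, rfl⟩ _ ⟨a', b', ha', hb', rfl⟩
      refine ⟨a + a', fun j => b j + b' j, ha.add ha', fun j => (hb j).add (hb' j), ?_⟩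
      simp only [add_mul, Finset.sum_add_distrib]
      ring
    · rintro c _ ⟨a, b, ha, hb, rfl⟩
      have hc : IsSumSq (c ^ 2) := by rw [pow_two]; exact IsSumSq.mul_self c
      refine ⟨c ^ 2 * a, fun j => c ^ 2 * b j, hc.mul ha, fun j => hc.mul (hb j), ?_⟩
      rw [mul_add, Finset.mul_sum]
      simp only [mul_assoc]
  have hμM : μ ∈ M := ⟨σ₀, σ, (isSOS_iff _).1 hσ₀, fun j => (isSOS_iff _).1 (hσ j), hμdef⟩
  obtain ⟨N, a, ha, b, hb, e⟩ := ball_mem μ hμ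
  have harch : IsQM.Arch (MvPolynomial (Fin n) ℝ) M := by
    refine arch_of_ball hM N ?_
    rw [e]
    exact hM.add_mem _ (hM.sos_mem ha) _ (hM.sos_mul hb hμM)
  have hpM : p ∈ M := by
    refine hM.mem_of_pos harch p (fun φ hφ => ?_)
    have hev : ∀ q, φ q = eval (fun i => φ (X i)) q := by
      intro q
      have h1 : φ = aeval (fun i => φ (X i)) := by
        apply MvPolynomial.algHom_ext
        intro i
        simp
      conv_lhs => rw [h1]
      rw [MvPolynomial.aeval_eq_eval]
    rw [hev]
    refine hp _ (fun j => ?_)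
    rw [← hev]
    apply hφ
    refine ⟨0, Pi.single j 1, IsSumSq.zero, fun i => ?_, ?_⟩
    · by_cases hij : i = j
      · subst hij; simp
      · simp [hij]
    · rw [zero_add, Finset.sum_eq_single j]
      · simp
      · intro i _ hij; simp [hij]
      · simp
  obtain ⟨τ₀, τ, h1, h2, h3⟩ := hpM
  exact ⟨τ₀, τ, (isSOS_iff _).2 h1, fun j => (isSOS_iff _).2 (h2 j), h3⟩
end
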